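/- arXiv:2111.06507 — 3 statements merged into one kernel-verified Lean document; each statement's English description precedes it below -/
import Mathlib

section
/- (Jordan) Let Ω be a finite set with |Ω| = n ≥ 9 and let G be a primitive subgroup of the symmetric group on Ω. If G contains a 3-cycle or a double transposition (a product of two disjoint transpositions), then G contains the alternating group on Ω, i.e., G is the alternating group or the full symmetric group on Ω. -/
open scoped Classical
open Polynomial

/-- A permutation group `G ≤ Perm Ω` is primitive: it acts transitively on `Ω` and every
block of the action is trivial (i.e. it preserves no nontrivial partition of `Ω`). -/
def IsPrimitivePermGroup {Ω : Type*} (G : Subgroup (Equiv.Perm Ω)) : Prop :=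
  MulAction.IsPretransitive G Ω ∧
    ∀ B : Set Ω, MulAction.IsBlock G B → MulAction.IsTrivialBlock B

/-!
By Jordan's theorem on 3-cycles it suffices to find a 3-cycle in `G`. Suppose there is none, and
let `F` be the family of supports of the double transpositions in `G`. Two members of `F` meet in
an even number of points: if the supports of `s` and `t` met in one point, then `⁅s, t⁆` would be
a 3-cycle; if in three points, then `s * t` would be a 3-cycle or a 5-cycle. A primitive group of
degree at least 9 containing a 5-cycle `g` is 5-transitive, hence contains every conjugate of `g`,
in particular `⁅g, swap a b⁆`, which is a 3-cycle when `g` moves `a` and fixes `b`. Moreover `F`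
contains the symmetric difference of any two of its members that meet in two points, so lying in a
common member of `F` is a `G`-invariant equivalence relation, and by primitivity any two points lie
in a common member. Finally, a family of 4-sets with even intersections that joins any two points
and separates any two points lives on at most 8 points.
-/

open Equiv Equiv.Perm MulAction
open scoped Finset symmDiff commutatorElement

section Primitive

theorem IsPrimitivePermGroup.isPreprimitive {Ω : Type*} {G : Subgroup (Perm Ω)}
    (hG : IsPrimitivePermGroup G) : IsPreprimitive G Ω where
  toIsPretransitive := hG.1
  isTrivialBlock_of_isBlock := hG.2 _

open scoped Pointwise in
theorem setoid_eq_top_of_isPreprimitive {M X : Type*} [Group M] [MulAction M X]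
    [IsPreprimitive M X] {r : Setoid X} (hr : ∀ (g : M) ⦃x y⦄, r x y → r (g • x) (g • y))
    (hbot : r ≠ ⊥) : r = ⊤ := by
  have class_isBlock (a : X) : IsBlock M {x | r a x} := by
    refine isBlock_iff_smul_eq_of_nonempty.mpr fun g ⟨y, hgy, hy⟩ ↦ ?_
    have hga : r a (g • a) := by
      have := hr g (Set.mem_smul_set_iff_inv_smul_mem.mp hgy)
      rw [smul_inv_smul] at this
      exact r.trans hy (r.symm this)
    ext x
    rw [Set.mem_smul_set_iff_inv_smul_mem]
    refine ⟨fun hx ↦ r.trans hga ?_, fun hx ↦ ?_⟩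
    · simpa using hr g hx
    · simpa using hr g⁻¹ (r.trans (r.symm hga) hx)
  obtain ⟨a, b, hab, hne⟩ : ∃ a b, r a b ∧ a ≠ b := by
    contrapose! hbot
    exact le_bot_iff.mp fun a b hab ↦ hbot a b hab
  have class_eq_univ : {x | r a x} = Set.univ :=
    (IsPreprimitive.isTrivialBlock_of_isBlock (class_isBlock a)).resolve_left
      fun h ↦ hne (h (r.refl a) hab)
  refine Setoid.eq_top_iff.mpr fun x y ↦ ?_
  have mem_class (z : X) : r a z := class_eq_univ.ge (Set.mem_univ z)
  exact r.trans (r.symm (mem_class x)) (mem_class y)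

end Primitive

section ThreeCycle

theorem isThreeCycle_commutator_of_support_inter_eq_singleton {α : Type*} [Fintype α]
    [DecidableEq α] {f g : Perm α} {a : α} (h : f.support ∩ g.support = {a}) :
    IsThreeCycle ⁅f, g⁆ := by
  have fixed_or (x : α) (hx : x ≠ a) : f x = x ∨ g x = x := by
    by_contra! hfg
    exact hx <| Finset.mem_singleton.mp <| h ▸ by simpa using hfg
  obtain ⟨hfa, hga⟩ : f a ≠ a ∧ g a ≠ a := by
    have : a ∈ f.support ∩ g.support := h ▸ Finset.mem_singleton_self a
    simpa using this
  have hgfa : g (f a) = f a := (fixed_or _ hfa).resolve_left (by simpa using hfa)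
  have hne : g a ≠ f a := fun h ↦ hga (g.injective (h ▸ hgfa))
  have hcomm : ⁅f, g⁆ = swap a (g a) * swap a (f a) := by
    rw [commutatorElement_def, mul_inv_eq_iff_eq_mul, mul_inv_eq_iff_eq_mul]
    ext x
    have hf (y z : α) : f y = f z ↔ y = z := f.injective.eq_iff
    have hg (y z : α) : g y = g z ↔ y = z := g.injective.eq_iff
    simp only [Perm.mul_apply, swap_apply_def]
    split_ifs <;> grind
  rw [hcomm]
  exact isThreeCycle_swap_mul_swap_same hga.symm hfa.symm hne

variable {α : Type*} [Fintype α] [DecidableEq α] {G : Subgroup (Perm α)}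

theorem conj_mem_of_isMultiplyPretransitive {g : Perm α}
    (hG : IsMultiplyPretransitive G α #g.support) (hg : g ∈ G) (σ : Perm α) :
    σ * g * σ⁻¹ ∈ G := by
  let ι : Fin #g.support ↪ α := g.support.equivFin.symm.toEmbedding.trans (.subtype _)
  obtain ⟨k, hk⟩ := isMultiplyPretransitive_iff.mp hG ι (ι.trans σ.toEmbedding)
  have agree (x : α) (hx : x ∈ g.support) : (k : Perm α) x = σ x := by
    simpa [ι] using! DFunLike.congr_fun hk (g.support.equivFin ⟨x, hx⟩)
  have hdisjoint : Perm.Disjoint ((k : Perm α)⁻¹ * σ) g := fun x ↦ by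
    rw [or_iff_not_imp_right, ← ne_eq, ← mem_support, Perm.mul_apply, Perm.inv_eq_iff_eq]
    exact fun hx ↦ (agree x hx).symm
  have hconj : σ * g * σ⁻¹ = k * g * (k : Perm α)⁻¹ := by
    have := hdisjoint.commute.eq
    rw [mul_inv_eq_iff_eq_mul, mul_assoc, mul_assoc, this.symm]
    group
  rw [hconj]
  exact G.mul_mem (G.mul_mem k.2 hg) (G.inv_mem k.2)

theorem exists_isThreeCycle_mem_of_isMultiplyPretransitive {g : Perm α} (hg : g ∈ G)
    (hG : IsMultiplyPretransitive G α #g.support) (hne : g ≠ 1) (huniv : g.support ≠ Finset.univ) :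
    ∃ c ∈ G, c.IsThreeCycle := by
  obtain ⟨a, ha⟩ := Finset.nonempty_iff_ne_empty.mpr (support_eq_empty_iff.not.mpr hne)
  obtain ⟨b, hb⟩ : ∃ b, b ∉ g.support := by simpa [Finset.eq_univ_iff_forall] using huniv
  have hinter : g.support ∩ (swap a b).support = {a} := by
    rw [support_swap (by grind)]
    grind
  refine ⟨⁅g, swap a b⁆, ?_, isThreeCycle_commutator_of_support_inter_eq_singleton hinter⟩
  have hconj := conj_mem_of_isMultiplyPretransitive hG hg (swap a b)
  simpa [commutatorElement_def, mul_assoc] using G.mul_mem hg (G.inv_mem hconj)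

theorem isMultiplyPreprimitive_of_isCycle_mem (hG : IsPreprimitive G α) {g : Perm α} (hg : g ∈ G)
    (hcycle : g.IsCycle) (hprime : (#g.support).Prime) (hlt : #g.support < Fintype.card α) :
    IsMultiplyPreprimitive G α (Fintype.card α - #g.support + 1) := by
  have := isPretransitive_of_isCycle_mem hcycle hg
  have hmoved : Nat.card (SubMulAction.ofFixingSubgroup G (g.support : Set α)ᶜ) = #g.support := by
    rw [← Set.ncard_coe_finset, ← Nat.card_coe_set_eq]
    exact Nat.card_congr <| subtypeEquivRight fun x ↦ by
      simp [SubMulAction.mem_ofFixingSubgroup_iff]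
  have hprim : IsPreprimitive (fixingSubgroup G (g.support : Set α)ᶜ)
      (SubMulAction.ofFixingSubgroup G (g.support : Set α)ᶜ) :=
    IsPreprimitive.of_prime_card (hmoved ▸ hprime)
  have hfixed : (g.support : Set α)ᶜ.ncard = Fintype.card α - #g.support - 1 + 1 := by
    rw [← Finset.coe_compl, Set.ncard_coe_finset, Finset.card_compl]
    omega
  have := hprime.two_le
  rw [show Fintype.card α - #g.support + 1 = Fintype.card α - #g.support - 1 + 2 by omega]
  exact hG.isMultiplyPreprimitive hfixed (by rw [Nat.card_eq_fintype_card]; omega) hprim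

theorem exists_isThreeCycle_mem_of_isCycle_mem (hG : IsPreprimitive G α) {g : Perm α} (hg : g ∈ G)
    (hcycle : g.IsCycle) (hprime : (#g.support).Prime)
    (hle : 2 * #g.support ≤ Fintype.card α + 1) : ∃ c ∈ G, c.IsThreeCycle := by
  have := hprime.two_le
  have hlt : #g.support < Fintype.card α := by omega
  have hmulti := isMultiplyPreprimitive_of_isCycle_mem hG hg hcycle hprime hlt
  refine exists_isThreeCycle_mem_of_isMultiplyPretransitive hg ?_ hcycle.ne_one ?_
  · exact isMultiplyPretransitive_of_le (n := Fintype.card α - #g.support + 1) (by omega)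
      (by rw [Nat.card_eq_fintype_card]; omega)
  · exact fun h ↦ hlt.ne (h ▸ Finset.card_univ)

end ThreeCycle

section DoubleTransposition

variable {Ω : Type*} [Fintype Ω] [DecidableEq Ω]

/-- A double transposition, i.e. a product of two disjoint transpositions, encoded by its
cycle type. -/
def IsDoubleTransposition (s : Perm Ω) : Prop :=
  s.cycleType = {2, 2}

theorem support_swap_mul_swap_of_nodup {a b c d : Ω} (h : [a, b, c, d].Nodup) :
    (swap a b * swap c d).support = {a, b, c, d} := by
  rw [(disjoint_swap_swap h).support_mul, support_swap (by grind), support_swap (by grind)]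
  grind

theorem isDoubleTransposition_swap_mul_swap {a b c d : Ω} (h : [a, b, c, d].Nodup) :
    IsDoubleTransposition (swap a b * swap c d) := by
  rw [IsDoubleTransposition, (disjoint_swap_swap h).cycleType_mul,
    (isSwap_iff_cycleType).mp ⟨a, b, by grind, rfl⟩,
    (isSwap_iff_cycleType).mp ⟨c, d, by grind, rfl⟩]
  rfl

namespace IsDoubleTransposition

variable {s t : Perm Ω}

theorem conj (hs : IsDoubleTransposition s) (g : Perm Ω) : IsDoubleTransposition (g * s * g⁻¹) :=
  cycleType_conj.trans hs

theorem card_support (hs : IsDoubleTransposition s) : #s.support = 4 := by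
  rw [← sum_cycleType, hs]
  rfl

theorem exists_mem_support_ne_ne (hs : IsDoubleTransposition s) (a b : Ω) :
    ∃ x ∈ s.support, x ≠ a ∧ x ≠ b := by
  obtain ⟨x, hxs, hx⟩ : ∃ x ∈ s.support, x ∉ ({a, b} : Finset Ω) :=
    Finset.exists_mem_notMem_of_card_lt_card <| by grind [Finset.card_le_two, hs.card_support]
  exact ⟨x, hxs, by simpa using hx⟩

theorem apply_apply (hs : IsDoubleTransposition s) (x : Ω) : s (s x) = x := by
  have horder : orderOf s = 2 := by
    rw [← lcm_cycleType, hs]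
    rfl
  rw [← Perm.mul_apply, ← sq, ← horder, pow_orderOf_eq_one, Perm.one_apply]

variable {x y : Ω}

theorem nodup (hs : IsDoubleTransposition s) (hx : x ∈ s.support) (hy : y ∈ s.support)
    (hyx : y ≠ x) (hysx : y ≠ s x) : [x, s x, y, s y].Nodup := by
  have := hs.apply_apply x
  have := hs.apply_apply y
  simp only [List.nodup_cons, List.mem_cons, List.not_mem_nil, mem_support] at hx hy ⊢
  grind

theorem support_eq (hs : IsDoubleTransposition s) (hx : x ∈ s.support) (hy : y ∈ s.support)
    (hyx : y ≠ x) (hysx : y ≠ s x) : s.support = {x, s x, y, s y} := by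
  have hcard : #({x, s x, y, s y} : Finset Ω) = 4 := by
    simpa using List.toFinset_card_of_nodup (hs.nodup hx hy hyx hysx)
  refine (Finset.eq_of_subset_of_card_le ?_ (by rw [hs.card_support, hcard])).symm
  simp only [Finset.insert_subset_iff, Finset.singleton_subset_iff, apply_mem_support]
  exact ⟨hx, hx, hy, hy⟩

theorem eq_swap_mul_swap (hs : IsDoubleTransposition s) (hx : x ∈ s.support) (hy : y ∈ s.support)
    (hyx : y ≠ x) (hysx : y ≠ s x) : s = swap x (s x) * swap y (s y) := by
  have hsupport := hs.support_eq hx hy hyx hysx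
  ext z
  have := hs.apply_apply x
  have := hs.apply_apply y
  have : z ∉ s.support → s z = z := notMem_support.mp
  simp only [Perm.mul_apply, swap_apply_def]
  grind

theorem isThreeCycle_mul (hs : IsDoubleTransposition s) (ht : IsDoubleTransposition t) {b : Ω}
    (hbs : b ∈ s.support) (hmem : ∀ x ∈ s.support, x ∈ t.support ↔ x ≠ b)
    (hb : t (s b) ∉ s.support) : (s * t).IsThreeCycle := by
  obtain ⟨c, hcs, hcb, hcsb⟩ := hs.exists_mem_support_ne_ne b (s b)
  have hsbs : s b ∈ s.support := apply_mem_support.mpr hbs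
  have hscs : s c ∈ s.support := apply_mem_support.mpr hcs
  have hsb : s b ≠ b := mem_support.mp hbs
  have hnodup := hs.nodup hbs hcs hcb hcsb
  have hsbt : s b ∈ t.support := (hmem _ hsbs).mpr hsb
  have hct : c ∈ t.support := (hmem _ hcs).mpr hcb
  have hsct : s c ∈ t.support := (hmem _ hscs).mpr (by grind)
  have htsb_ne : t (s b) ≠ c := by grind
  have htc : t c = s c := by
    rw [ht.support_eq hsbt hct hcsb htsb_ne.symm] at hsct
    grind
  rw [hs.eq_swap_mul_swap hbs hcs hcb hcsb, ht.eq_swap_mul_swap hct hsbt hcsb.symm (by grind), htc,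
    mul_assoc, swap_mul_self_mul, swap_comm b]
  exact isThreeCycle_swap_mul_swap_same hsb (mem_support.mp hsbt).symm (by grind)

theorem isCycle_mul (hs : IsDoubleTransposition s) (ht : IsDoubleTransposition t) {b : Ω}
    (hbs : b ∈ s.support) (hmem : ∀ x ∈ s.support, x ∈ t.support ↔ x ≠ b)
    (hb : t (s b) ∈ s.support) : (s * t).IsCycle ∧ #(s * t).support = 5 := by
  have hsbs : s b ∈ s.support := apply_mem_support.mpr hbs
  have hsbt : s b ∈ t.support := (hmem _ hsbs).mpr (mem_support.mp hbs)
  set a := s b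
  set c := t a
  have hct : c ∈ t.support := apply_mem_support.mpr hsbt
  have hcb : c ≠ b := (hmem _ hb).mp hct
  have hca : c ≠ a := mem_support.mp hsbt
  have hs_nodup := hs.nodup hbs hb hcb hca
  have hs_eq := hs.eq_swap_mul_swap hbs hb hcb hca
  set d := s c
  have hdt : d ∈ t.support := (hmem _ (apply_mem_support.mpr hb)).mpr (by grind)
  have ht_nodup := ht.nodup hsbt hdt (by grind) (by grind)
  have ht_eq := ht.eq_swap_mul_swap hsbt hdt (by grind) (by grind)
  set e := t d
  have het : e ∈ t.support := apply_mem_support.mpr hdt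
  have hcycle_nodup : [a, d, e, c, b].Nodup := by grind
  have hcycle : s * t = [a, d, e, c, b].formPerm := by
    rw [hs_eq, ht_eq]
    ext y
    simp only [List.formPerm_cons_cons, List.formPerm_singleton, Perm.mul_apply, swap_apply_def,
      Perm.one_apply]
    grind
  rw [hcycle, List.support_formPerm_of_nodup _ hcycle_nodup (by simp),
    List.toFinset_card_of_nodup hcycle_nodup]
  exact ⟨List.isCycle_formPerm hcycle_nodup (by simp), rfl⟩

theorem isThreeCycle_or_isCycle_mul_of_card_inter_eq_three (hs : IsDoubleTransposition s)
    (ht : IsDoubleTransposition t) (h : #(s.support ∩ t.support) = 3) :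
    (s * t).IsThreeCycle ∨ (s * t).IsCycle ∧ #(s * t).support = 5 := by
  obtain ⟨b, hb⟩ : ∃ b, s.support \ t.support = {b} := by
    rw [← Finset.card_eq_one, Finset.card_sdiff, Finset.inter_comm, h, hs.card_support]
  have mem_diff (x : Ω) : x ∈ s.support ∧ x ∉ t.support ↔ x = b := by
    rw [← Finset.mem_sdiff, hb, Finset.mem_singleton]
  have hbs : b ∈ s.support := ((mem_diff b).mpr rfl).1
  have hmem (x : Ω) (hx : x ∈ s.support) : x ∈ t.support ↔ x ≠ b := by grind
  by_cases hts : t (s b) ∈ s.support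
  · exact .inr (hs.isCycle_mul ht hbs hmem hts)
  · exact .inl (hs.isThreeCycle_mul ht hbs hmem hts)

theorem support_conj_eq_symmDiff (hs : IsDoubleTransposition s) (ht : IsDoubleTransposition t)
    (h : #(s.support ∩ t.support) = 2) {p : Ω} (hp : p ∈ s.support ∩ t.support)
    (htp : t p ∉ s.support) : (t * s * t⁻¹).support = s.support ∆ t.support := by
  have hcard : #(s.support ∆ t.support) = 4 := by
    rw [symmDiff_def, Finset.sup_eq_union, Finset.card_union_of_disjoint disjoint_sdiff_sdiff,
      Finset.card_sdiff, Finset.card_sdiff, Finset.inter_comm, h,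
      hs.card_support, ht.card_support]
  refine Finset.eq_of_subset_of_card_le (fun z hz ↦ ?_) (by rw [hcard, (hs.conj t).card_support])
  obtain ⟨y, hys, rfl⟩ : ∃ y ∈ s.support, t y = z := by
    rwa [support_conj, Finset.mem_map] at hz
  by_cases hyt : y ∈ t.support
  · obtain ⟨u, v, -, huv⟩ := Finset.card_eq_two.mp h
    have mem_inter (x : Ω) : x ∈ s.support ∧ x ∈ t.support ↔ x = u ∨ x = v := by
      simpa using Finset.ext_iff.mp huv x
    have htyt : t y ∈ t.support := apply_mem_support.mpr hyt
    have hty : t y ≠ y := mem_support.mp hyt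
    have := ht.apply_apply y
    have htys : t y ∉ s.support := by grind
    exact Finset.mem_symmDiff.mpr (.inr ⟨htyt, htys⟩)
  · rw [notMem_support.mp hyt]
    exact Finset.mem_symmDiff.mpr (.inl ⟨hys, hyt⟩)

theorem mul_of_apply_eq (hs : IsDoubleTransposition s) (ht : IsDoubleTransposition t)
    (h : #(s.support ∩ t.support) = 2) {p : Ω} (hp : p ∈ s.support ∩ t.support)
    (hst : s p = t p) :
    IsDoubleTransposition (s * t) ∧ (s * t).support = s.support ∆ t.support := by
  obtain ⟨hps, hpt⟩ := Finset.mem_inter.mp hp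
  have hsp : s p ≠ p := mem_support.mp hps
  have hinter : s.support ∩ t.support = {p, s p} := by
    refine (Finset.eq_of_subset_of_card_le ?_ (by rw [h, Finset.card_pair hsp.symm])).symm
    have := apply_mem_support.mpr hps
    have := apply_mem_support.mpr hpt
    grind
  have mem_inter (x : Ω) : x ∈ s.support ∧ x ∈ t.support ↔ x = p ∨ x = s p := by
    simpa using Finset.ext_iff.mp hinter x
  obtain ⟨x, hxs, hxp, hxsp⟩ := hs.exists_mem_support_ne_ne p (s p)
  obtain ⟨z, hzt, hzp, hztp⟩ := ht.exists_mem_support_ne_ne p (t p)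
  have hs_nodup := hs.nodup hps hxs hxp hxsp
  have ht_nodup := ht.nodup hpt hzt hzp hztp
  have hs_support := hs.support_eq hps hxs hxp hxsp
  have ht_support := ht.support_eq hpt hzt hzp hztp
  have hnodup : [x, s x, z, t z].Nodup := by grind
  have hmul : s * t = swap x (s x) * swap z (t z) := by
    conv_lhs =>
      rw [hs.eq_swap_mul_swap hxs hps hxp.symm (by grind), ht.eq_swap_mul_swap hpt hzt hzp hztp,
        hst, mul_assoc, swap_mul_self_mul]
  rw [hmul]
  refine ⟨isDoubleTransposition_swap_mul_swap hnodup, ?_⟩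
  rw [support_swap_mul_swap_of_nodup hnodup, hs_support, ht_support, ← hst]
  ext y
  simp only [Finset.mem_symmDiff]
  grind

theorem exists_mem_support_eq_symmDiff {G : Subgroup (Perm Ω)} (hsG : s ∈ G) (htG : t ∈ G)
    (hs : IsDoubleTransposition s) (ht : IsDoubleTransposition t)
    (h : #(s.support ∩ t.support) = 2) :
    ∃ u ∈ G, IsDoubleTransposition u ∧ u.support = s.support ∆ t.support := by
  obtain ⟨p, hp⟩ : (s.support ∩ t.support).Nonempty := Finset.card_pos.mp (by omega)
  obtain ⟨hps, hpt⟩ := Finset.mem_inter.mp hp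
  by_cases htp : t p ∈ s.support
  · by_cases hsp : s p ∈ t.support
    · have hst : s p = t p := by
        by_contra hne
        have := mem_support.mp hps
        have := mem_support.mp hpt
        have hsub : {p, s p, t p} ⊆ s.support ∩ t.support := by
          have := apply_mem_support.mpr hps
          have := apply_mem_support.mpr hpt
          grind
        have := Finset.card_le_card hsub
        grind
      exact ⟨s * t, G.mul_mem hsG htG, hs.mul_of_apply_eq ht h hp hst⟩
    · rw [symmDiff_comm]
      rw [Finset.inter_comm] at h hp
      exact ⟨s * t * s⁻¹, G.mul_mem (G.mul_mem hsG htG) (G.inv_mem hsG), ht.conj s,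
        ht.support_conj_eq_symmDiff hs h hp hsp⟩
  · exact ⟨t * s * t⁻¹, G.mul_mem (G.mul_mem htG hsG) (G.inv_mem htG), hs.conj t,
      hs.support_conj_eq_symmDiff ht h hp htp⟩

end IsDoubleTransposition

end DoubleTransposition

section Tetrads

variable {Ω : Type*} [DecidableEq Ω]

theorem card_inter_inter_add_card_inter_sdiff (D A B : Finset Ω) :
    #(D ∩ (A ∩ B)) + #(D ∩ (A \ B)) = #(D ∩ A) := by
  rw [← Finset.inter_assoc, ← Finset.inter_sdiff_assoc, Finset.card_inter_add_card_sdiff]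

theorem card_inter_union (D A B : Finset Ω) :
    #(D ∩ (A ∪ B)) = #(D ∩ A) + #(D ∩ (B \ A)) := by
  rw [← Finset.card_union_of_disjoint, ← Finset.inter_union_distrib_left,
    Finset.union_sdiff_self_eq_union]
  exact (Finset.disjoint_sdiff.mono_left Finset.inter_subset_right).mono_right
    Finset.inter_subset_right

/-- A family of 4-element sets, any two of which meet in an even number of points. The family of
supports of the double transpositions in a primitive group of degree at least 9 without 3-cycles
is of this kind. -/
structure IsEvenTetradFamily (F : Set (Finset Ω)) : Prop where
  card_eq : ∀ A ∈ F, #A = 4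
  even_card_inter : ∀ A ∈ F, ∀ B ∈ F, Even #(A ∩ B)

namespace IsEvenTetradFamily

variable {F : Set (Finset Ω)} {A B D E : Finset Ω}

theorem card_inter_eq_two_or_eq (hF : IsEvenTetradFamily F) (hA : A ∈ F) (hB : B ∈ F)
    (h : (A ∩ B).Nonempty) : #(A ∩ B) = 2 ∨ A = B := by
  have hle := Finset.card_le_card (Finset.inter_subset_left : A ∩ B ⊆ A)
  have heven := hF.even_card_inter A hA B hB
  have hcardA := hF.card_eq A hA
  have hcardB := hF.card_eq B hB
  by_cases h4 : #(A ∩ B) = 4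
  · right
    rw [← Finset.eq_of_subset_of_card_le Finset.inter_subset_left (by omega : #A ≤ #(A ∩ B))]
    exact Finset.eq_of_subset_of_card_le Finset.inter_subset_right (by omega)
  · left
    grind

/-- Being equal or lying in a common member of a family of tetrads with even intersections; this
is transitive once the family contains the symmetric difference of any two of its members that
meet in two points. -/
def joinSetoid (hF : IsEvenTetradFamily F)
    (hsymm : ∀ A ∈ F, ∀ B ∈ F, #(A ∩ B) = 2 → A ∆ B ∈ F) : Setoid Ω where
  r x y := x = y ∨ ∃ A ∈ F, x ∈ A ∧ y ∈ A
  iseqv.refl _ := .inl rfl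
  iseqv.symm := by
    rintro x y (rfl | ⟨A, hA, hx, hy⟩)
    exacts [.inl rfl, .inr ⟨A, hA, hy, hx⟩]
  iseqv.trans := by
    rintro x y z (rfl | ⟨A, hA, hxA, hyA⟩) (rfl | ⟨B, hB, hyB, hzB⟩)
    · exact .inl rfl
    · exact .inr ⟨B, hB, hyB, hzB⟩
    · exact .inr ⟨A, hA, hxA, hyA⟩
    · right
      by_cases hxB : x ∈ B
      · exact ⟨B, hB, hxB, hzB⟩
      by_cases hzA : z ∈ A
      · exact ⟨A, hA, hxA, hzA⟩
      have hAB : #(A ∩ B) = 2 :=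
        (hF.card_inter_eq_two_or_eq hA hB ⟨y, Finset.mem_inter.mpr ⟨hyA, hyB⟩⟩).resolve_right
          (by grind)
      exact ⟨A ∆ B, hsymm A hA B hB hAB, Finset.mem_symmDiff.mpr (.inl ⟨hxA, hxB⟩),
        Finset.mem_symmDiff.mpr (.inr ⟨hzB, hzA⟩)⟩

theorem card_sdiff_eq_two (hF : IsEvenTetradFamily F) (hA : A ∈ F) (hAB : #(A ∩ B) = 2) :
    #(A \ B) = 2 := by
  rw [Finset.card_sdiff, Finset.inter_comm, hAB, hF.card_eq A hA]

theorem inter_union_eq (hF : IsEvenTetradFamily F) (hA : A ∈ F) (hB : B ∈ F) (hD : D ∈ F)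
    (hAB : #(A ∩ B) = 2) (hDAB : 2 ≤ #(D \ (A ∪ B))) :
    D ∩ (A ∪ B) = ∅ ∨
      D ∩ (A ∪ B) = A ∩ B ∨ D ∩ (A ∪ B) = A \ B ∨ D ∩ (A ∪ B) = B \ A := by
  have hBA : #(B ∩ A) = 2 := by rwa [Finset.inter_comm]
  have hcardD := hF.card_eq D hD
  have hevenA := hF.even_card_inter D hD A hA
  have hevenB := hF.even_card_inter D hD B hB
  have hsplitA := card_inter_inter_add_card_inter_sdiff D A B
  have hsplitB := card_inter_inter_add_card_inter_sdiff D B A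
  have hunion := card_inter_union D A B
  have hsplit := Finset.card_inter_add_card_sdiff D (A ∪ B)
  rw [Finset.inter_comm B A] at hsplitB
  have eq_or_card_eq_zero {P : Finset Ω} (hP : #P = 2) (hsub : P ⊆ A ∪ B)
      (heven : Even #(D ∩ P)) : D ∩ (A ∪ B) = P ∨ #(D ∩ P) = 0 := by
    rw [or_iff_not_imp_right]
    intro hpos
    have hDP : D ∩ P = P := Finset.eq_of_subset_of_card_le Finset.inter_subset_right (by grind)
    rw [← hDP]
    exact (Finset.eq_of_subset_of_card_le (Finset.inter_subset_inter_left hsub)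
      (by grind)).symm
  have heven : Even #(D ∩ (A ∩ B)) := by grind
  have hinter := eq_or_card_eq_zero hAB (by grind) heven
  have hsdiffA := eq_or_card_eq_zero (hF.card_sdiff_eq_two hA hAB) (by grind) (by grind)
  have hsdiffB := eq_or_card_eq_zero (hF.card_sdiff_eq_two hB hBA) (by grind) (by grind)
  rw [← Finset.card_eq_zero]
  grind

theorem card_inter_sdiff_eq_one (hF : IsEvenTetradFamily F) (hA : A ∈ F) (hE : E ∈ F)
    (hAB : #(A ∩ B) = 2) (hEAB : #(E ∩ (A ∩ B)) = 1) : #(E ∩ (A \ B)) = 1 := by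
  have hsplit := card_inter_inter_add_card_inter_sdiff E A B
  have heven := hF.even_card_inter E hE A hA
  have hle := Finset.card_le_card (Finset.inter_subset_right : E ∩ (A \ B) ⊆ A \ B)
  rw [hF.card_sdiff_eq_two hA hAB] at hle
  grind

theorem card_sdiff_union_eq_one (hF : IsEvenTetradFamily F) (hA : A ∈ F) (hB : B ∈ F)
    (hE : E ∈ F) (hAB : #(A ∩ B) = 2) (hEAB : #(E ∩ (A ∩ B)) = 1) : #(E \ (A ∪ B)) = 1 := by
  have hA_one := hF.card_inter_sdiff_eq_one hA hE hAB hEAB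
  have hB_one := hF.card_inter_sdiff_eq_one hB hE (Finset.inter_comm A B ▸ hAB)
    (Finset.inter_comm A B ▸ hEAB)
  have := hF.card_eq E hE
  have := card_inter_inter_add_card_inter_sdiff E A B
  have := card_inter_union E A B
  have := Finset.card_inter_add_card_sdiff E (A ∪ B)
  omega

theorem mem_iff_nonempty_inter_union (hF : IsEvenTetradFamily F) (hA : A ∈ F) (hB : B ∈ F)
    (hD : D ∈ F) (hE : E ∈ F) (hAB : #(A ∩ B) = 2) (hEAB : #(E ∩ (A ∩ B)) = 1) {y : Ω}
    (hy : E \ (A ∪ B) = {y}) (hDAB : 2 ≤ #(D \ (A ∪ B))) :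
    y ∈ D ↔ (D ∩ (A ∪ B)).Nonempty := by
  have heven := hF.even_card_inter E hE D hD
  have hy_sdiff : (E ∩ D) \ (A ∪ B) = {y} ∩ D := by rw [← hy, Finset.sdiff_inter_right_comm]
  rw [← Finset.card_inter_add_card_sdiff (E ∩ D) (A ∪ B), hy_sdiff, Finset.inter_assoc] at heven
  rcases (D ∩ (A ∪ B)).eq_empty_or_nonempty with hempty | hnonempty
  · have : y ∉ D := fun hyD ↦ by
      rw [hempty, Finset.singleton_inter_of_mem hyD] at heven
      simp at heven
    simpa [hempty]
  · have hone : #(E ∩ (D ∩ (A ∪ B))) = 1 := by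
      rcases hF.inter_union_eq hA hB hD hAB hDAB with h | h | h | h
      · exact absurd h hnonempty.ne_empty
      · rwa [h]
      · rw [h, hF.card_inter_sdiff_eq_one hA hE hAB hEAB]
      · rw [h, hF.card_inter_sdiff_eq_one hB hE (Finset.inter_comm A B ▸ hAB)
          (Finset.inter_comm A B ▸ hEAB)]
    refine iff_of_true (by_contra fun hyD ↦ ?_) hnonempty
    rw [hone, Finset.singleton_inter_of_notMem hyD] at heven
    simp at heven

theorem card_sdiff_union_eq_two (hF : IsEvenTetradFamily F) (hA : A ∈ F) (hB : B ∈ F)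
    (hD : D ∈ F) (hAB : #(A ∩ B) = 2) (hDAB : 2 ≤ #(D \ (A ∪ B)))
    (hnonempty : (D ∩ (A ∪ B)).Nonempty) : #(D \ (A ∪ B)) = 2 := by
  have hinter : #(D ∩ (A ∪ B)) = 2 := by
    rcases hF.inter_union_eq hA hB hD hAB hDAB with h | h | h | h
    · exact absurd h hnonempty.ne_empty
    · rwa [h]
    · rw [h, hF.card_sdiff_eq_two hA hAB]
    · rw [h, hF.card_sdiff_eq_two hB (Finset.inter_comm A B ▸ hAB)]
  have := Finset.card_inter_add_card_sdiff D (A ∪ B)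
  rw [hF.card_eq D hD] at this
  omega

theorem inter_union_eq_empty_and_notMem (hF : IsEvenTetradFamily F) (hA : A ∈ F) (hB : B ∈ F)
    (hD : D ∈ F) (hE : E ∈ F) (hAB : #(A ∩ B) = 2) (hEAB : #(E ∩ (A ∩ B)) = 1) {u v y : Ω}
    (hy : E \ (A ∪ B) = {y}) (hu : u ∈ D \ insert y (A ∪ B)) (hv : v ∈ D \ insert y (A ∪ B))
    (huv : u ≠ v) : D ∩ (A ∪ B) = ∅ ∧ y ∉ D := by
  have hyAB : y ∉ A ∪ B := (Finset.mem_sdiff.mp (hy ▸ Finset.mem_singleton_self y)).2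
  have hpair : {u, v} ⊆ D \ insert y (A ∪ B) := by grind
  have hDAB : 2 ≤ #(D \ (A ∪ B)) := by
    rw [← Finset.card_pair huv]
    exact Finset.card_le_card (by grind)
  have hiff := hF.mem_iff_nonempty_inter_union hA hB hD hE hAB hEAB hy hDAB
  have hyD : y ∉ D := fun hyD ↦ by
    have htwo := hF.card_sdiff_union_eq_two hA hB hD hAB hDAB (hiff.mp hyD)
    have hthree : #{y, u, v} ≤ #(D \ (A ∪ B)) := Finset.card_le_card (by grind)
    rw [htwo, Finset.card_insert_of_notMem (by grind), Finset.card_pair huv] at hthree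
    omega
  exact ⟨Finset.not_nonempty_iff_eq_empty.mp (hiff.not.mp hyD), hyD⟩

variable [Fintype Ω]

theorem card_le_eight_of_card_inter (hF : IsEvenTetradFamily F)
    (hjoin : ∀ a b, a ≠ b → ∃ A ∈ F, a ∈ A ∧ b ∈ A) (hA : A ∈ F) (hB : B ∈ F) (hE : E ∈ F)
    (hAB : #(A ∩ B) = 2) (hEAB : #(E ∩ (A ∩ B)) = 1) : Fintype.card Ω ≤ 8 := by
  by_contra! hcard
  obtain ⟨y, hy⟩ := Finset.card_eq_one.mp (hF.card_sdiff_union_eq_one hA hB hE hAB hEAB)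
  have eq_empty {D : Finset Ω} (hD : D ∈ F) {u v : Ω} :=
    hF.inter_union_eq_empty_and_notMem hA hB hD hE hAB hEAB (u := u) (v := v) hy
  obtain ⟨x, hx, z, hz, hxz⟩ : ∃ x ∈ (insert y (A ∪ B))ᶜ, ∃ z ∈ (insert y (A ∪ B))ᶜ, x ≠ z := by
    rw [← Finset.one_lt_card, Finset.card_compl]
    have := Finset.card_insert_le y (A ∪ B)
    have := Finset.card_union_add_card_inter A B
    rw [hF.card_eq A hA, hF.card_eq B hB] at this
    omega
  rw [Finset.mem_compl] at hx hz
  obtain ⟨D, hD, hxD, hzD⟩ := hjoin x z hxz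
  obtain ⟨hDAB, hyD⟩ := eq_empty hD (by grind) (by grind) hxz
  obtain ⟨a, haAB⟩ : (A ∩ B).Nonempty := Finset.card_pos.mp (by omega)
  obtain ⟨C, hC, hxC, haC⟩ := hjoin x a (by grind)
  have notMem_of_mem (w : Ω) (hw : w ∈ D) : w ∉ A ∪ B := fun h ↦
    Finset.eq_empty_iff_forall_notMem.mp hDAB w (Finset.mem_inter.mpr ⟨hw, h⟩)
  have hDC : #(D ∩ C) = 2 :=
    (hF.card_inter_eq_two_or_eq hD hC ⟨x, Finset.mem_inter.mpr ⟨hxD, hxC⟩⟩).resolve_right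
      (by grind)
  obtain ⟨w, hw, hwx⟩ := Finset.exists_mem_ne (by omega : 1 < #(D ∩ C)) x
  have hCAB := (eq_empty hC (u := x) (v := w) (by grind) (by grind) hwx.symm).1
  exact Finset.eq_empty_iff_forall_notMem.mp hCAB a (by grind)

theorem card_le_eight (hF : IsEvenTetradFamily F)
    (hjoin : ∀ a b, a ≠ b → ∃ A ∈ F, a ∈ A ∧ b ∈ A)
    (hsep : ∀ a b, a ≠ b → ∃ A ∈ F, a ∈ A ∧ b ∉ A) : Fintype.card Ω ≤ 8 := by
  rcases subsingleton_or_nontrivial Ω with _ | _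
  · exact Fintype.card_le_one_iff_subsingleton.mpr ‹_› |>.trans (by norm_num)
  obtain ⟨a, b, hab⟩ := exists_pair_ne Ω
  obtain ⟨A, hA, haA, hbA⟩ := hjoin a b hab
  obtain ⟨B, hB, haB, hbB⟩ := hsep a b hab
  have haAB : a ∈ A ∩ B := Finset.mem_inter.mpr ⟨haA, haB⟩
  have hAB : #(A ∩ B) = 2 := (hF.card_inter_eq_two_or_eq hA hB ⟨a, haAB⟩).resolve_right (by grind)
  obtain ⟨c, hcAB, hca⟩ := Finset.exists_mem_ne (by omega : 1 < #(A ∩ B)) a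
  obtain ⟨E, hE, haE, hcE⟩ := hsep a c hca.symm
  have hAB_eq : {a, c} = A ∩ B :=
    Finset.eq_of_subset_of_card_le (by grind) (by rw [hAB, Finset.card_pair hca.symm])
  refine hF.card_le_eight_of_card_inter hjoin hA hB hE hAB ?_
  rw [← hAB_eq, Finset.inter_insert_of_mem haE, Finset.inter_singleton_of_notMem hcE]
  rfl

end IsEvenTetradFamily

end Tetrads

section Supports

variable {Ω : Type*} [Fintype Ω] [DecidableEq Ω] {G : Subgroup (Perm Ω)}

/-- The supports of the double transpositions lying in `G`. -/
def doubleTranspositionSupports (G : Subgroup (Perm Ω)) : Set (Finset Ω) :=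
  {A | ∃ s ∈ G, IsDoubleTransposition s ∧ s.support = A}

theorem map_mem_doubleTranspositionSupports {A : Finset Ω} {g : Perm Ω} (hg : g ∈ G)
    (hA : A ∈ doubleTranspositionSupports G) :
    A.map g.toEmbedding ∈ doubleTranspositionSupports G := by
  obtain ⟨s, hsG, hs, rfl⟩ := hA
  exact ⟨g * s * g⁻¹, G.mul_mem (G.mul_mem hg hsG) (G.inv_mem hg), hs.conj g, support_conj⟩

theorem symmDiff_mem_doubleTranspositionSupports {A B : Finset Ω}
    (hA : A ∈ doubleTranspositionSupports G) (hB : B ∈ doubleTranspositionSupports G)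
    (h : #(A ∩ B) = 2) : A ∆ B ∈ doubleTranspositionSupports G := by
  obtain ⟨s, hsG, hs, rfl⟩ := hA
  obtain ⟨t, htG, ht, rfl⟩ := hB
  exact hs.exists_mem_support_eq_symmDiff hsG htG ht h

theorem isEvenTetradFamily_doubleTranspositionSupports (hG : IsPreprimitive G Ω)
    (hcard : 9 ≤ Fintype.card Ω) (hthree : ∀ c ∈ G, ¬ c.IsThreeCycle) :
    IsEvenTetradFamily (doubleTranspositionSupports G) where
  card_eq := by
    rintro _ ⟨s, -, hs, rfl⟩
    exact hs.card_support
  even_card_inter := by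
    rintro _ ⟨s, hsG, hs, rfl⟩ _ ⟨t, htG, ht, rfl⟩
    have hinter_ne_one : #(s.support ∩ t.support) ≠ 1 := fun h ↦ by
      obtain ⟨a, ha⟩ := Finset.card_eq_one.mp h
      have hmem : ⁅s, t⁆ ∈ G :=
        G.mul_mem (G.mul_mem (G.mul_mem hsG htG) (G.inv_mem hsG)) (G.inv_mem htG)
      exact hthree _ hmem (isThreeCycle_commutator_of_support_inter_eq_singleton ha)
    have hinter_ne_three : #(s.support ∩ t.support) ≠ 3 := fun h ↦ by
      rcases hs.isThreeCycle_or_isCycle_mul_of_card_inter_eq_three ht h with hc | ⟨hc, h5⟩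
      · exact hthree _ (G.mul_mem hsG htG) hc
      · obtain ⟨c, hcG, hc⟩ := exists_isThreeCycle_mem_of_isCycle_mem hG (G.mul_mem hsG htG) hc
          (h5 ▸ Nat.prime_five) (by omega)
        exact hthree c hcG hc
    have hle : #(s.support ∩ t.support) ≤ 4 :=
      hs.card_support ▸ Finset.card_le_card Finset.inter_subset_left
    grind

theorem exists_doubleTranspositionSupports_mem_mem (hG : IsPreprimitive G Ω)
    (hF : IsEvenTetradFamily (doubleTranspositionSupports G))
    (hne : (doubleTranspositionSupports G).Nonempty) {a b : Ω} (hab : a ≠ b) :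
    ∃ A ∈ doubleTranspositionSupports G, a ∈ A ∧ b ∈ A := by
  let r := hF.joinSetoid fun A hA B hB ↦ symmDiff_mem_doubleTranspositionSupports hA hB
  have htop : r = ⊤ := by
    refine setoid_eq_top_of_isPreprimitive (M := G) ?_ fun hbot ↦ ?_
    · rintro g x y (rfl | ⟨A, hA, hx, hy⟩)
      · exact .inl rfl
      · exact .inr ⟨_, map_mem_doubleTranspositionSupports g.2 hA,
          Finset.mem_map_of_mem _ hx, Finset.mem_map_of_mem _ hy⟩
    · obtain ⟨A, hA⟩ := hne
      obtain ⟨x, hx, y, hy, hxy⟩ := Finset.one_lt_card.mp (hF.card_eq A hA ▸ by norm_num : 1 < #A)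
      have hr : r x y := .inr ⟨A, hA, hx, hy⟩
      exact hxy (hbot.le hr)
  have hr : r a b := htop ▸ trivial
  exact hr.resolve_left hab

open scoped Pointwise in
theorem exists_doubleTranspositionSupports_mem_notMem (hG : IsPreprimitive G Ω)
    (hcard : 4 < Fintype.card Ω) (hne : (doubleTranspositionSupports G).Nonempty) {a b : Ω}
    (hab : a ≠ b) : ∃ A ∈ doubleTranspositionSupports G, a ∈ A ∧ b ∉ A := by
  obtain ⟨A, hA⟩ := hne
  have hcardA : #A = 4 := by
    obtain ⟨s, -, hs, rfl⟩ := hA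
    exact hs.card_support
  have hnonempty : (A : Set Ω).Nonempty := Finset.coe_nonempty.mpr (Finset.card_pos.mp (by omega))
  have hne_univ : (A : Set Ω) ≠ Set.univ := fun h ↦ by
    rw [Finset.coe_eq_univ.mp h, Finset.card_univ] at hcardA
    omega
  obtain ⟨g, ha, hb⟩ := IsPreprimitive.exists_mem_smul_and_notMem_smul (G := G)
    A.finite_toSet hnonempty hne_univ hab
  have hcoe : (A.map (g : Perm Ω).toEmbedding : Set Ω) = g • (A : Set Ω) := by
    rw [Finset.coe_map]
    rfl
  rw [← hcoe, Finset.mem_coe] at ha hb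
  exact ⟨_, map_mem_doubleTranspositionSupports g.2 hA, ha, hb⟩

theorem exists_isThreeCycle_mem_of_isDoubleTransposition_mem (hG : IsPreprimitive G Ω)
    (hcard : 9 ≤ Fintype.card Ω) {s : Perm Ω} (hsG : s ∈ G) (hs : IsDoubleTransposition s) :
    ∃ c ∈ G, c.IsThreeCycle := by
  by_contra! hthree
  have hF := isEvenTetradFamily_doubleTranspositionSupports hG hcard hthree
  have hne : (doubleTranspositionSupports G).Nonempty := ⟨_, s, hsG, hs, rfl⟩
  have := hF.card_le_eight
    (fun _ _ ↦ exists_doubleTranspositionSupports_mem_mem hG hF hne)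
    (fun _ _ ↦ exists_doubleTranspositionSupports_mem_notMem hG (by omega) hne)
  omega

end Supports

/-- **Jordan's theorem** (Proposition 2.2 of Bhargava's paper). A primitive subgroup of
the symmetric group on a finite set `Ω` with `|Ω| = n ≥ 9` containing a 3-cycle or a
double transposition (a product of two disjoint transpositions) contains the
alternating group on `Ω`. -/
theorem jordan_primitive_threeCycle_or_doubleTransposition {Ω : Type*} [Fintype Ω]
    [DecidableEq Ω] (hn : 9 ≤ Fintype.card Ω) (G : Subgroup (Equiv.Perm Ω))
    (hprim : IsPrimitivePermGroup G)
    (h : ∃ g ∈ G, Equiv.Perm.IsThreeCycle g ∨ g.cycleType = {2, 2}) :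
    alternatingGroup Ω ≤ G := by
  have hG : IsPreprimitive G Ω := hprim.isPreprimitive
  obtain ⟨c, hcG, hc⟩ : ∃ c ∈ G, c.IsThreeCycle := by
    obtain ⟨g, hgG, hg | hg⟩ := h
    · exact ⟨g, hgG, hg⟩
    · exact exists_isThreeCycle_mem_of_isDoubleTransposition_mem hG hn hgG hg
  exact alternatingGroup_le_of_isPreprimitive_of_isThreeCycle_mem hG hc hcG
end

section
/- If G ⊆ S_n is a primitive permutation group not equal to the alternating group A_n or the symmetric group S_n, then ind(G) ≥ ⌊√n⌋. -/
open scoped Classical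
open Polynomial

/-- The index `ind(g)` of a permutation `g` of a finite set `Ω`: `|Ω|` minus the number
of orbits of the cyclic group generated by `g` on `Ω`. -/
noncomputable def permIndex {Ω : Type*} [Fintype Ω] (g : Equiv.Perm Ω) : ℕ :=
  Fintype.card Ω - Nat.card (MulAction.orbitRel.Quotient (Subgroup.zpowers g) Ω)

/-- The index `ind(G)` of a permutation group `G ≤ Perm Ω`: the minimum of `ind(g)` over
non-identity `g ∈ G`. -/
noncomputable def groupIndex {Ω : Type*} [Fintype Ω] (G : Subgroup (Equiv.Perm Ω)) : ℕ :=
  sInf {k | ∃ g ∈ G, g ≠ 1 ∧ permIndex g = k}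

/-!
Suppose `g ∈ G` is not the identity and has index `k` with `(k + 1) ^ 2 ≤ n`. An element of index
at most `k` moves at most `2 * k` points, and for a `G`-invariant relation `R` the rows of `x` and
`h x` differ in at most `ind h` places. Joining `x` to `h x` whenever `ind h ≤ k` gives a connected
graph by primitivity, and double counting in it shows that every union of orbitals has out-degree
at most `k + 1` or at least `n - (k + 1)`. A maximal invariant tolerance of small out-degree
therefore contains its own square, so it is an equivalence relation, and primitivity makes `G`
2-transitive. Then every pair of points is joined by an element of index at most `k`, and the same
averaging over triples makes `G` 3-transitive. Now Bochert's argument applies: an element of minimal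
degree `m ≥ 4` has a conjugate that it does not commute with and whose support meets its own in few
points, so that the commutator has degree less than `m`. The one exception, `m = 6` and `k = 3`, is
excluded by the cube of a product of two involutions. Hence `G` contains a transposition or a
3-cycle, and Jordan's theorem gives `A_n ≤ G`.
-/

section
open Equiv Finset

section PermIndex

variable {α : Type*} {g : Perm α}

theorem orbitRel_zpowers_iff_sameCycle {a b : α} :
    MulAction.orbitRel (Subgroup.zpowers g) α a b ↔ g.SameCycle b a :=
  ⟨fun ⟨⟨_, i, rfl⟩, h⟩ ↦ ⟨i, h⟩, fun ⟨i, h⟩ ↦ ⟨⟨g ^ i, i, rfl⟩, h⟩⟩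

variable [Fintype α]

theorem exists_card_eq_permIndex (g : Perm α) :
    ∃ A : Finset α, #A = permIndex g ∧ ∀ z, ∃! w, w ∉ A ∧ g.SameCycle z w := by
  let π : α → MulAction.orbitRel.Quotient (Subgroup.zpowers g) α := Quotient.mk''
  let rep : MulAction.orbitRel.Quotient (Subgroup.zpowers g) α → α := Quotient.out
  refine ⟨(univ.image rep)ᶜ, ?_, fun z ↦ ?_⟩
  · rw [card_compl, card_image_of_injective _ Quotient.out_injective, card_univ,
      ← Nat.card_eq_fintype_card (α := Quotient _), permIndex, MulAction.orbitRel.Quotient]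
  · refine ⟨rep (π z), ⟨by simp, ?_⟩, ?_⟩
    · exact orbitRel_zpowers_iff_sameCycle.mp (Quotient.mk_out (s := MulAction.orbitRel _ α) z)
    · rintro w ⟨hw, hzw⟩
      obtain ⟨q, rfl⟩ : ∃ q, rep q = w := by simpa using hw
      have : q = π z := by
        rw [← Quotient.out_eq' q]
        exact Quotient.sound' (orbitRel_zpowers_iff_sameCycle.mpr hzw)
      rw [this]

theorem card_le_permIndex {A : Finset α} (hA : ∀ z, ∃ w ∉ A, g.SameCycle z w) :
    #A ≤ permIndex g := by
  have hsurj : Function.Surjective fun w : (Aᶜ : Finset α) ↦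
      (Quotient.mk'' w.1 : MulAction.orbitRel.Quotient (Subgroup.zpowers g) α) := by
    rintro ⟨z⟩
    obtain ⟨w, hw, hzw⟩ := hA z
    exact ⟨⟨w, mem_compl.mpr hw⟩, Quotient.sound' (orbitRel_zpowers_iff_sameCycle.mpr hzw)⟩
  have hcard := Nat.card_le_card_of_surjective _ hsurj
  rw [Nat.card_eq_fintype_card (α := (Aᶜ : Finset α)), Fintype.card_coe, card_compl] at hcard
  have := card_le_univ A
  rw [permIndex, MulAction.orbitRel.Quotient]
  omega

theorem permIndex_zpow_le (g : Perm α) (i : ℤ) : permIndex (g ^ i) ≤ permIndex g := by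
  obtain ⟨A, hA, hrep⟩ := exists_card_eq_permIndex (g ^ i)
  rw [← hA]
  refine card_le_permIndex fun z ↦ ?_
  obtain ⟨w, ⟨hw, hzw⟩, -⟩ := hrep z
  exact ⟨w, hw, hzw.of_zpow⟩

theorem permIndex_inv (g : Perm α) : permIndex g⁻¹ = permIndex g :=
  le_antisymm (by simpa using permIndex_zpow_le g (-1)) (by simpa using permIndex_zpow_le g⁻¹ (-1))

theorem permIndex_conj_le (g x : Perm α) : permIndex (x * g * x⁻¹) ≤ permIndex g := by
  obtain ⟨A, hA, hrep⟩ := exists_card_eq_permIndex (x * g * x⁻¹)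
  rw [← hA, ← card_map x.symm.toEmbedding]
  refine card_le_permIndex fun z ↦ ?_
  obtain ⟨w, ⟨hw, hzw⟩, -⟩ := hrep (x z)
  exact ⟨x.symm w, by simpa using hw, by simpa using Perm.sameCycle_conj.mp hzw⟩

theorem card_filter_lt_le_permIndex {β : Type*} [LinearOrder β] (g : Perm α) (f : α → β) :
    #{z | f (g.symm z) < f z} ≤ permIndex g := by
  refine card_le_permIndex fun z ↦ ?_
  obtain ⟨w, hzw, hmin⟩ :=
    Set.exists_min_image {w | g.SameCycle z w} f (Set.toFinite _) ⟨z, .refl g z⟩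
  exact ⟨w, by simpa using hmin _ (hzw.symm_apply_right), hzw⟩

theorem card_filter_and_not_le_permIndex (g : Perm α) (p : α → Prop) :
    #{z | p z ∧ ¬p (g.symm z)} ≤ permIndex g := by
  convert card_filter_lt_le_permIndex g (fun z ↦ p z) using 4
  rw [lt_iff_le_not_ge]
  simp only [le_Prop_eq]
  tauto

/-- Every nontrivial cycle has all but one of its points in `A`, so each moved point or its image
lies in `A`. -/
theorem support_subset_union_map [DecidableEq α] {A : Finset α}
    (hA : ∀ z, ∃! w, w ∉ A ∧ g.SameCycle z w) : g.support ⊆ A ∪ A.map g.symm.toEmbedding := by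
  intro z hz
  by_contra hzA
  have : z ∉ A ∧ g z ∉ A := by simpa [← Perm.eq_inv_iff_eq] using hzA
  exact Perm.mem_support.mp hz
    ((hA z).unique ⟨this.2, (Perm.SameCycle.refl g z).apply_right⟩ ⟨this.1, .refl g z⟩)

theorem card_support_le_two_mul_permIndex [DecidableEq α] (g : Perm α) :
    #g.support ≤ 2 * permIndex g := by
  obtain ⟨A, hA, hrep⟩ := exists_card_eq_permIndex g
  calc #g.support ≤ #(A ∪ A.map g.symm.toEmbedding) := card_le_card (support_subset_union_map hrep)
    _ ≤ #A + #A := (card_union_le _ _).trans_eq (by rw [card_map])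
    _ = 2 * permIndex g := by rw [hA, two_mul]

theorem mul_self_eq_one_of_two_mul_permIndex_le [DecidableEq α]
    (hg : 2 * permIndex g ≤ #g.support) : g * g = 1 := by
  obtain ⟨A, hA, hrep⟩ := exists_card_eq_permIndex g
  by_contra hne
  obtain ⟨a, ha⟩ : ∃ a, g (g a) ≠ a := by simpa [Perm.ext_iff] using hne
  obtain ⟨w, ⟨-, i, hi⟩, huniq⟩ := hrep a
  have hmem : ∀ z, g.SameCycle w z → z ≠ w → z ∈ A := fun z hz hzw ↦ by
    by_contra hzA
    exact hzw (huniq z ⟨hzA, .trans ⟨i, hi⟩ hz⟩)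
  have hw2 : g (g w) ≠ w := fun h ↦ ha <| by
    have hcomm := Commute.zpow_right (Commute.mul_left (.refl g) (.refl g)) i
    apply (g ^ i).injective
    calc (g ^ i) (g (g a)) = g (g ((g ^ i) a)) := congr($hcomm.symm a)
      _ = (g ^ i) a := by rw [hi, h]
  have hw1 : g w ≠ w := fun h ↦ hw2 (by rw [h, h])
  have hgw : g w ∈ A ∩ A.map g.symm.toEmbedding := by
    simpa using And.intro (hmem _ (.apply_right (.refl g w)) hw1)
      (hmem _ (.apply_right (.apply_right (.refl g w))) hw2)
  have hunion := card_union_add_card_inter A (A.map g.symm.toEmbedding)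
  have hsub := card_le_card (support_subset_union_map hrep)
  have hpos := card_pos.mpr ⟨_, hgw⟩
  rw [card_map] at hunion
  omega

end PermIndex

section InvariantRel

/-- A binary relation preserved by the action of `G`, that is, a union of orbitals of `G`. -/
def IsInvariantRel (G : Type*) {α : Type*} [SMul G α] (R : α → α → Prop) : Prop :=
  ∀ (g : G) ⦃x y : α⦄, R x y → R (g • x) (g • y)

variable {G α : Type*} [Group G] [MulAction G α] {R : α → α → Prop}

namespace IsInvariantRel

theorem smul_iff (hR : IsInvariantRel G R) (g : G) {x y : α} :
    R (g • x) (g • y) ↔ R x y :=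
  ⟨fun h ↦ by simpa using hR g⁻¹ h, fun h ↦ hR g h⟩

theorem flip (hR : IsInvariantRel G R) : IsInvariantRel G (flip R) := fun g _ _ h ↦ hR g h

open Pointwise in
theorem eq_or_forall_of_equivalence [MulAction.IsPreprimitive G α] (hR : IsInvariantRel G R)
    (heqv : Equivalence R) : (∀ x y, R x y → x = y) ∨ ∀ x y, R x y := by
  have hmem : ∀ (g : G) x z, z ∈ g • {y | R x y} ↔ R (g • x) z := fun g x z ↦ by
    rw [Set.mem_smul_set_iff_inv_smul_mem, Set.mem_ofPred_eq, ← hR.smul_iff g, smul_inv_smul]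
  have hblock : ∀ x, MulAction.IsBlock G {y | R x y} := fun x g₁ g₂ hne ↦ by
    refine Set.disjoint_left.mpr fun z hz₁ hz₂ ↦ hne (Set.ext fun u ↦ ?_)
    rw [hmem] at hz₁ hz₂ ⊢
    have h := heqv.trans hz₁ (heqv.symm hz₂)
    rw [hmem]
    exact ⟨heqv.trans (heqv.symm h), heqv.trans h⟩
  by_cases huniv : ∃ x, {y | R x y} = Set.univ
  · obtain ⟨x, hx⟩ := huniv
    have hx' : ∀ y, R x y := Set.eq_univ_iff_forall.mp hx
    exact .inr fun y z ↦ heqv.trans (heqv.symm (hx' y)) (hx' z)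
  · refine .inl fun x y hxy ↦ ?_
    have htriv := MulAction.IsPreprimitive.isTrivialBlock_of_isBlock (hblock x)
    exact htriv.resolve_right (fun h ↦ huniv ⟨x, h⟩) (heqv.refl x) hxy

variable [Fintype α]

theorem card_row_smul (hR : IsInvariantRel G R) (g : G) (x : α) :
    #{z | R (g • x) z} = #{z | R x z} := by
  refine (card_equiv (MulAction.toPerm g) fun z ↦ ?_).symm
  simp [hR.smul_iff]

variable [MulAction.IsPretransitive G α]

theorem card_row_eq (hR : IsInvariantRel G R) (x y : α) :
    #{z | R x z} = #{z | R y z} := by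
  obtain ⟨g, rfl⟩ := MulAction.exists_smul_eq G x y
  rw [hR.card_row_smul]

theorem card_col_eq_card_row (hR : IsInvariantRel G R) (x y : α) :
    #{z | R z x} = #{z | R y z} := by
  have := card_mul_eq_card_mul (s := univ) (t := univ) (m := #{z | R y z}) (n := #{z | R z x}) R
    (fun z _ ↦ hR.card_row_eq z y) (fun z _ ↦ hR.flip.card_row_eq z x)
  exact (Nat.eq_of_mul_eq_mul_left (card_pos.mpr ⟨x, mem_univ x⟩) this).symm

end IsInvariantRel

end InvariantRel

section PermGroup

variable {α : Type*} [Fintype α] {G : Subgroup (Perm α)} {R : α → α → Prop} {k : ℕ}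

theorem IsInvariantRel.card_row_diff_le (hR : IsInvariantRel G R) {h : Perm α} (hh : h ∈ G)
    (x : α) : #{z | R x z ∧ ¬R (h x) z} ≤ permIndex h := by
  convert card_filter_and_not_le_permIndex h (R x) using 5 with z
  rw [← hR.smul_iff ⟨h, hh⟩ (x := x)]
  simp [Subgroup.smul_def]

/-- The graph joining two distinct points whenever an element of `G` of index at most `k` maps one
to the other. -/
def smallIndexGraph (G : Subgroup (Perm α)) (k : ℕ) : SimpleGraph α where
  Adj x y := x ≠ y ∧ ∃ h ∈ G, permIndex h ≤ k ∧ h x = y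
  symm := ⟨by
    rintro x _ ⟨hne, h, hh, hk, rfl⟩
    exact ⟨hne.symm, h⁻¹, inv_mem hh, (permIndex_inv h).trans_le hk, by simp⟩⟩
  loopless := ⟨fun _ h ↦ h.1 rfl⟩

theorem isInvariantRel_smallIndexGraph_adj : IsInvariantRel G (smallIndexGraph G k).Adj := by
  rintro g x _ ⟨hne, h, hh, hk, rfl⟩
  exact ⟨by simpa using hne, g * h * g⁻¹, mul_mem (mul_mem g.2 hh) (inv_mem g.2),
    (permIndex_conj_le h g).trans hk, by simp [Subgroup.smul_def]⟩

theorem exists_permIndex_le_apply_eq (htop : smallIndexGraph G k = ⊤) {x y : α} (hxy : x ≠ y) :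
    ∃ h ∈ G, permIndex h ≤ k ∧ h x = y :=
  (show (smallIndexGraph G k).Adj x y from htop ▸ hxy).2

/-- The action of `g : G` on `smallIndexGraph G k`. -/
def smallIndexGraphIso (k : ℕ) (g : G) : smallIndexGraph G k ≃g smallIndexGraph G k where
  toEquiv := g
  map_rel_iff' := isInvariantRel_smallIndexGraph_adj.smul_iff g

theorem smallIndexGraph_connected [MulAction.IsPreprimitive G α] {g : Perm α} (hg : g ∈ G)
    (hg1 : g ≠ 1) (hgk : permIndex g ≤ k) : (smallIndexGraph G k).Connected := by
  obtain ⟨x, hx⟩ : ∃ x, g x ≠ x := by simpa [Perm.ext_iff] using hg1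
  have hadj : (smallIndexGraph G k).Adj x (g x) := ⟨hx.symm, g, hg, hgk, rfl⟩
  have hinv : IsInvariantRel G (smallIndexGraph G k).Reachable := fun h _ _ hab ↦
    hab.map (smallIndexGraphIso k h).toHom
  rcases hinv.eq_or_forall_of_equivalence (SimpleGraph.reachable_is_equivalence _) with heq | hall
  · exact absurd (heq _ _ hadj.reachable).symm hx
  · exact { preconnected := hall, nonempty := ⟨x⟩ }

theorem dist_smallIndexGraph_smul (hconn : (smallIndexGraph G k).Connected) (g : G) (x y : α) :
    (smallIndexGraph G k).dist (g • x) (g • y) = (smallIndexGraph G k).dist x y := by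
  have hle : ∀ (g : G) x y,
      (smallIndexGraph G k).dist (g • x) (g • y) ≤ (smallIndexGraph G k).dist x y := by
    intro g x y
    obtain ⟨p, hp⟩ := hconn.exists_walk_length_eq_dist x y
    rw [← hp, ← SimpleGraph.Walk.length_map (smallIndexGraphIso k g).toHom p]
    exact SimpleGraph.dist_le _
  exact le_antisymm (hle g x y) (by simpa using hle g⁻¹ (g • x) (g • y))

theorem card_row_diff_le_of_adj (hR : IsInvariantRel G R) {x y : α}
    (hxy : (smallIndexGraph G k).Adj x y) : #{z | R x z ∧ ¬R y z} ≤ k := by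
  obtain ⟨-, h, hh, hk, rfl⟩ := hxy
  exact (hR.card_row_diff_le hh x).trans hk

theorem card_dist_lt_le_of_adj (hconn : (smallIndexGraph G k).Connected) {a b : α}
    (hab : (smallIndexGraph G k).Adj a b) :
    #{z | (smallIndexGraph G k).dist b z < (smallIndexGraph G k).dist a z} ≤ k := by
  obtain ⟨-, h, hh, hk, rfl⟩ := hab
  have hdist : ∀ z, (smallIndexGraph G k).dist (h a) z = (smallIndexGraph G k).dist a (h.symm z) :=
    fun z ↦ by
      simpa [Subgroup.smul_def] using dist_smallIndexGraph_smul hconn ⟨h, hh⟩ a (h.symm z)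
  simp only [hdist]
  exact (card_filter_lt_le_permIndex h _).trans hk

theorem two_le_card_inter_neighborFinset {a b z : α} (haz : (smallIndexGraph G k)ᶜ.Adj a z)
    (hab : (smallIndexGraph G k).Adj a b) (hbz : (smallIndexGraph G k).Adj b z) :
    2 ≤ #((smallIndexGraph G k).neighborFinset a ∩ (smallIndexGraph G k).neighborFinset z) := by
  obtain ⟨hne, hnadj⟩ := haz
  obtain ⟨-, h, hh, hk, rfl⟩ := id hab
  have hac : (smallIndexGraph G k).Adj a (h.symm z) := by
    simpa [Subgroup.smul_def] using isInvariantRel_smallIndexGraph_adj ⟨h⁻¹, inv_mem hh⟩ hbz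
  have hcz : (smallIndexGraph G k).Adj (h.symm z) z :=
    ⟨fun e ↦ hnadj (by rwa [e] at hac), h, hh, hk, by simp⟩
  have hbc : h a ≠ h.symm z := fun e ↦ hnadj
    ⟨hne, h ^ (2 : ℤ), zpow_mem hh 2, (permIndex_zpow_le h 2).trans hk, by
      rw [zpow_two, Perm.mul_apply, e, apply_symm_apply]⟩
  rw [← card_pair hbc]
  exact card_le_card (by simp [insert_subset_iff, hab, hbz.symm, hac, hcz.symm])

theorem degree_add_two_le_card_inter_neighborFinset {a b z : α}
    (haz : (smallIndexGraph G k)ᶜ.Adj a z)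
    (hab : (smallIndexGraph G k).Adj a b) (hbz : (smallIndexGraph G k).Adj b z) :
    (smallIndexGraph G k).degree a + 2 ≤
      #((smallIndexGraph G k).neighborFinset a ∩ (smallIndexGraph G k).neighborFinset z)
        + 2 * k := by
  set Γ := smallIndexGraph G k
  have hinv : IsInvariantRel G Γ.Adj := isInvariantRel_smallIndexGraph_adj
  have hsub : Γ.neighborFinset a \ Γ.neighborFinset z ⊆
      ({w | Γ.Adj a w ∧ ¬Γ.Adj b w} : Finset α).erase b ∪
        ({w | Γ.Adj b w ∧ ¬Γ.Adj z w} : Finset α).erase z := by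
    intro w hw
    obtain ⟨haw, hzw⟩ : Γ.Adj a w ∧ ¬Γ.Adj z w := by simpa using hw
    by_cases hbw : Γ.Adj b w
    · have : w ≠ z := by rintro rfl; exact haz.2 haw
      simp [*]
    · have : w ≠ b := by rintro rfl; exact hzw hbz.symm
      simp [*]
  have hcard := (card_le_card hsub).trans (card_union_le _ _)
  rw [card_erase_of_mem (by simp [hab]), card_erase_of_mem (by simp [hbz])] at hcard
  have hb : 0 < #{w | Γ.Adj a w ∧ ¬Γ.Adj b w} := card_pos.mpr ⟨b, by simp [hab]⟩
  have hz : 0 < #{w | Γ.Adj b w ∧ ¬Γ.Adj z w} := card_pos.mpr ⟨z, by simp [hbz]⟩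
  have hbk := card_row_diff_le_of_adj hinv hab
  have hzk := card_row_diff_le_of_adj hinv hbz
  have hsplit := card_sdiff_add_card_inter (Γ.neighborFinset a) (Γ.neighborFinset z)
  rw [Γ.card_neighborFinset_eq_degree] at hsplit
  omega

end PermGroup

section GraphCounting

variable {α : Type*} {Γ : SimpleGraph α}

theorem exists_adj_adj_dist_add_two_le (hconn : Γ.Connected) {a z : α} (haz : Γᶜ.Adj a z) :
    ∃ b y, Γ.Adj a b ∧ Γ.Adj b y ∧ Γᶜ.Adj a y ∧ Γ.dist y z + 2 ≤ Γ.dist a z := by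
  obtain ⟨p, hp⟩ := hconn.exists_walk_length_eq_dist a z
  match p with
  | .nil => exact absurd rfl haz.ne
  | .cons hab .nil => exact absurd hab haz.2
  | .cons (v := b) hab (.cons (v := y) hby q) =>
    simp only [SimpleGraph.Walk.length_cons] at hp
    have hq := SimpleGraph.dist_le q
    refine ⟨b, y, hab, hby, ⟨?_, fun hay ↦ ?_⟩, by omega⟩
    · rintro rfl
      omega
    · have := hconn.dist_triangle (u := a) (v := y) (w := z)
      have := SimpleGraph.dist_eq_one_iff_adj.mpr hay
      omega

variable [Fintype α]

theorem sum_univ_eq_add_sum_neighborFinset (Γ : SimpleGraph α) (x : α) (f : α → ℕ) :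
    ∑ y, f y = f x + (∑ y ∈ Γ.neighborFinset x, f y + ∑ y ∈ Γᶜ.neighborFinset x, f y) := by
  have hdisj : Disjoint (Γ.neighborFinset x) (Γᶜ.neighborFinset x) :=
    disjoint_left.mpr fun y h h' ↦ by simp_all
  have hx : x ∉ Γ.neighborFinset x ∪ Γᶜ.neighborFinset x := by simp
  rw [← sum_union hdisj, ← sum_insert hx]
  congr 1
  ext y
  simp only [mem_univ, mem_insert, mem_union, SimpleGraph.mem_neighborFinset,
    SimpleGraph.compl_adj, true_iff]
  tauto

/-- Double counting of the pairs `(b, z)` with `b` a neighbour of `a` that is closer to `z`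
than `a` is. -/
theorem degree_add_degree_compl_mul_le (hconn : Γ.Connected) {a : α} {k c : ℕ}
    (hk : ∀ b, Γ.Adj a b → #{z | Γ.dist b z < Γ.dist a z} ≤ k)
    (hc : ∀ b z, Γ.Adj a b → Γ.Adj b z → Γᶜ.Adj a z →
      c ≤ #(Γ.neighborFinset a ∩ Γ.neighborFinset z)) :
    Γ.degree a + Γᶜ.degree a * c ≤ Γ.degree a * k := by
  let closer (z : α) : Finset α := {b ∈ Γ.neighborFinset a | Γ.dist b z < Γ.dist a z}
  have hadj : ∀ z ∈ Γ.neighborFinset a, 1 ≤ #(closer z) := fun z hz ↦ by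
    have hz' : Γ.Adj a z := by simpa using hz
    exact card_pos.mpr ⟨z, by simpa [closer, hz'] using hconn.pos_dist_of_ne hz'.ne⟩
  have hnonadj : ∀ z ∈ Γᶜ.neighborFinset a, c ≤ #(closer z) := fun z hz ↦ by
    obtain ⟨b, y, hab, hby, hay, hdist⟩ :=
      exists_adj_adj_dist_add_two_le hconn ((Γᶜ.mem_neighborFinset a z).mp hz)
    refine (hc b y hab hby hay).trans (card_le_card fun w hw ↦ ?_)
    obtain ⟨haw, hyw⟩ : Γ.Adj a w ∧ Γ.Adj y w := by simpa using hw
    have := hconn.dist_triangle (u := w) (v := y) (w := z)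
    have := SimpleGraph.dist_eq_one_iff_adj.mpr hyw.symm
    simp only [closer, mem_filter, SimpleGraph.mem_neighborFinset]
    exact ⟨haw, by omega⟩
  calc Γ.degree a + Γᶜ.degree a * c
      ≤ ∑ z ∈ Γ.neighborFinset a, #(closer z) + ∑ z ∈ Γᶜ.neighborFinset a, #(closer z) := by
        gcongr
        · simpa using card_nsmul_le_sum _ _ 1 hadj
        · simpa using card_nsmul_le_sum _ _ c hnonadj
    _ ≤ ∑ z, #(closer z) := by
        rw [sum_univ_eq_add_sum_neighborFinset Γ a]
        exact Nat.le_add_left _ _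
    _ = ∑ b ∈ Γ.neighborFinset a, #{z | Γ.dist b z < Γ.dist a z} :=
        (sum_card_bipartiteAbove_eq_sum_card_bipartiteBelow
          (fun b z ↦ Γ.dist b z < Γ.dist a z)).symm
    _ ≤ Γ.degree a * k := by
        rw [← Γ.card_neighborFinset_eq_degree, ← smul_eq_mul]
        exact sum_le_card_nsmul _ _ k fun b hb ↦ hk b (by simpa using hb)

end GraphCounting

section RowGap

theorem sum_card_filter_not {β γ : Type*} {s : Finset β} {t : Finset γ} {R : β → γ → Prop} {c : ℕ}
    (hcol : ∀ z ∈ t, #{y ∈ s | R y z} = c) :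
    ∑ y ∈ s, #{z ∈ t | ¬R y z} = #t * (#s - c) := by
  rw [← show ∑ z ∈ t, #{y ∈ s | ¬R y z} = ∑ y ∈ s, #{z ∈ t | ¬R y z} from
    (sum_card_bipartiteAbove_eq_sum_card_bipartiteBelow (fun y z ↦ ¬R y z)).symm]
  refine sum_const_nat fun z hz ↦ ?_
  rw [← card_filter_add_card_filter_not (s := s) (fun y ↦ R y z), hcol z hz,
    Nat.add_sub_cancel_left]

theorem mul_add_two_lt_of_degree_bounds {n k v w : ℕ} (hk : 2 ≤ k) (hn : (k + 1) ^ 2 ≤ n)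
    (hvw : v + w + 1 = n) (h₁ : v + w * 2 ≤ v * k) (h₂ : v + w * (v + 2 - 2 * k) ≤ v * k) :
    k * w + 2 < k * (k + 1) := by
  have hv : 2 * k + 1 ≤ v := by
    by_contra! hv
    nlinarith
  obtain ⟨x, rfl⟩ := Nat.exists_eq_add_of_le hv
  rw [show 2 * k + 1 + x + 2 - 2 * k = x + 3 by omega] at h₂
  have hw : w ≤ k := by
    by_contra! hw
    nlinarith [Nat.zero_le x, Nat.mul_le_mul_left x hw]
  rcases hw.lt_or_eq with hlt | rfl <;> nlinarith

variable {α : Type*} [Fintype α] {G : Subgroup (Perm α)} {R : α → α → Prop} {k : ℕ}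

/-- No union of orbitals of `G` has out-degree strictly between `k + 1` and `|α| - (k + 1)`. -/
def HasRowGap (G : Subgroup (Perm α)) (k : ℕ) : Prop :=
  ∀ R : α → α → Prop, IsInvariantRel G R → ∀ x,
    #{z | R x z} ≤ k + 1 ∨ Fintype.card α ≤ #{z | R x z} + (k + 1)

theorem sum_card_row_diff [MulAction.IsPretransitive G α] (hR : IsInvariantRel G R) (x : α) :
    ∑ y, #{z | R x z ∧ ¬R y z} = #{z | R x z} * (Fintype.card α - #{z | R x z}) := by
  simpa only [filter_filter, card_univ] using sum_card_filter_not (s := univ) (t := {z | R x z})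
    fun z _ ↦ hR.card_col_eq_card_row z x

theorem exists_adj_adj_of_card_lt {Γ : SimpleGraph α} {x y : α}
    (hxy : Γᶜ.Adj x y) (hcard : Fintype.card α < Γ.degree x + Γ.degree y + 2) :
    ∃ b, Γ.Adj x b ∧ Γ.Adj b y := by
  have hx : Γ.neighborFinset x ⊆ {x, y}ᶜ := fun z hz ↦ by
    have hz' : Γ.Adj x z := by simpa using hz
    have : z ≠ y := by rintro rfl; exact hxy.2 hz'
    simp [hz'.ne', this]
  have hy : Γ.neighborFinset y ⊆ {x, y}ᶜ := fun z hz ↦ by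
    have hz' : Γ.Adj y z := by simpa using hz
    have : z ≠ x := by rintro rfl; exact hxy.2 hz'.symm
    simp [hz'.ne', this]
  obtain ⟨b, hb⟩ := inter_nonempty_of_card_lt_card_add_card hx hy <| by
    rw [card_compl, card_pair hxy.ne, Γ.card_neighborFinset_eq_degree,
      Γ.card_neighborFinset_eq_degree]
    have := card_le_univ ({x, y} : Finset α)
    rw [card_pair hxy.ne] at this
    omega
  exact ⟨b, by simpa using mem_of_mem_inter_left hb,
    .symm (by simpa using mem_of_mem_inter_right hb)⟩

theorem degree_smallIndexGraph_eq [MulAction.IsPretransitive G α] (k : ℕ) (x y : α) :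
    (smallIndexGraph G k).degree x = (smallIndexGraph G k).degree y := by
  obtain ⟨g, rfl⟩ := MulAction.exists_smul_eq G x y
  exact ((smallIndexGraphIso k g).degree_eq x).symm

theorem card_row_diff_le_two_mul (hR : IsInvariantRel G R) {x b y : α}
    (hxb : (smallIndexGraph G k).Adj x b) (hby : (smallIndexGraph G k).Adj b y) :
    #{z | R x z ∧ ¬R y z} ≤ 2 * k := by
  calc #{z | R x z ∧ ¬R y z}
      ≤ #(({z | R x z ∧ ¬R b z} : Finset α) ∪ ({z | R b z ∧ ¬R y z} : Finset α)) :=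
        card_le_card fun z ↦ by simp only [mem_union, mem_filter, mem_univ, true_and]; tauto
    _ ≤ k + k := (card_union_le _ _).trans <|
        add_le_add (card_row_diff_le_of_adj hR hxb) (card_row_diff_le_of_adj hR hby)
    _ = 2 * k := (two_mul k).symm

theorem card_row_mul_le [MulAction.IsPretransitive G α] (hR : IsInvariantRel G R) (x : α)
    (hdeg : Fintype.card α < 2 * (smallIndexGraph G k).degree x + 2) :
    #{z | R x z} * (Fintype.card α - #{z | R x z}) ≤
      k * (Fintype.card α - 1 + (smallIndexGraph G k)ᶜ.degree x) := by
  set Γ := smallIndexGraph G k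
  have hadj : ∀ y ∈ Γ.neighborFinset x, #{z | R x z ∧ ¬R y z} ≤ k := fun y hy ↦
    card_row_diff_le_of_adj hR (by simpa using hy)
  have hnonadj : ∀ y ∈ Γᶜ.neighborFinset x, #{z | R x z ∧ ¬R y z} ≤ 2 * k := fun y hy ↦ by
    obtain ⟨b, hxb, hby⟩ := exists_adj_adj_of_card_lt ((Γᶜ.mem_neighborFinset x y).mp hy)
      (by rwa [degree_smallIndexGraph_eq k y x, ← two_mul])
    exact card_row_diff_le_two_mul hR hxb hby
  have hcompl := Γ.degree_compl x
  have hlt := Γ.degree_lt_card_verts x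
  calc #{z | R x z} * (Fintype.card α - #{z | R x z})
      = ∑ y ∈ Γ.neighborFinset x, #{z | R x z ∧ ¬R y z} +
        ∑ y ∈ Γᶜ.neighborFinset x, #{z | R x z ∧ ¬R y z} := by
        rw [← sum_card_row_diff hR, sum_univ_eq_add_sum_neighborFinset Γ x]
        simp
    _ ≤ #(Γ.neighborFinset x) • k + #(Γᶜ.neighborFinset x) • (2 * k) :=
        add_le_add (sum_le_card_nsmul _ _ _ hadj) (sum_le_card_nsmul _ _ _ hnonadj)
    _ = k * (Γ.degree x + Γᶜ.degree x + Γᶜ.degree x) := by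
        simp only [SimpleGraph.card_neighborFinset_eq_degree, smul_eq_mul]
        ring
    _ = k * (Fintype.card α - 1 + Γᶜ.degree x) := by
        congr 2
        omega

theorem le_or_le_of_mul_sub_le {n k w β : ℕ} (hn : (k + 1) ^ 2 ≤ n)
    (hw : k * w + 2 < k * (k + 1)) (hβ : β ≤ n) (h : β * (n - β) ≤ k * (n - 1 + w)) :
    β ≤ k + 1 ∨ n ≤ β + (k + 1) := by
  by_contra! hcon
  obtain ⟨c, rfl⟩ := Nat.exists_eq_add_of_le hβ
  obtain ⟨x, rfl⟩ := Nat.exists_eq_add_of_le hcon.1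
  obtain ⟨y, rfl⟩ : ∃ y, c = k + 2 + y := Nat.exists_eq_add_of_le (by omega)
  rw [Nat.add_sub_cancel_left,
    show k + 1 + 1 + x + (k + 2 + y) - 1 = 2 * k + 3 + x + y by omega] at h
  nlinarith

theorem hasRowGap [MulAction.IsPreprimitive G α] {g : Perm α} (hg : g ∈ G) (hg1 : g ≠ 1)
    (hgk : permIndex g ≤ k) (hk : 2 ≤ k) (hn : (k + 1) ^ 2 ≤ Fintype.card α) :
    HasRowGap G k := by
  intro R hR x
  set Γ := smallIndexGraph G k
  have hconn : Γ.Connected := smallIndexGraph_connected hg hg1 hgk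
  have hdist : ∀ b, Γ.Adj x b → #{z | Γ.dist b z < Γ.dist x z} ≤ k := fun b hb ↦
    card_dist_lt_le_of_adj hconn hb
  have hcompl := Γ.degree_compl x
  have hlt := Γ.degree_lt_card_verts x
  have hw : k * Γᶜ.degree x + 2 < k * (k + 1) := by
    refine mul_add_two_lt_of_degree_bounds hk hn (v := Γ.degree x) (by omega) ?_ ?_
    · exact degree_add_degree_compl_mul_le hconn hdist fun b z hab hbz haz ↦
        two_le_card_inter_neighborFinset haz hab hbz
    · refine degree_add_degree_compl_mul_le hconn hdist fun b z hab hbz haz ↦ ?_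
      have : Γ.degree x + 2 ≤ #(Γ.neighborFinset x ∩ Γ.neighborFinset z) + 2 * k :=
        degree_add_two_le_card_inter_neighborFinset haz hab hbz
      omega
  have hdeg : Fintype.card α < 2 * Γ.degree x + 2 := by
    have : Γᶜ.degree x ≤ k := by nlinarith
    have : 2 * k < Fintype.card α := by nlinarith
    omega
  exact le_or_le_of_mul_sub_le hn hw (card_le_univ _) (card_row_mul_le hR x hdeg)

end RowGap

section Tolerance

/-- An invariant tolerance: a reflexive symmetric relation preserved by the action of `G`. -/
structure IsInvariantTolerance (G : Type*) {α : Type*} [SMul G α] (R : α → α → Prop) : Prop where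
  isInvariantRel : IsInvariantRel G R
  refl : ∀ x, R x x
  symm : ∀ {x y}, R x y → R y x

/-- The orbit of the pair `(u, v)` under `G`, as a relation. -/
def orbital (G : Type*) {α : Type*} [SMul G α] (u v a b : α) : Prop :=
  ∃ g : G, g • u = a ∧ g • v = b

variable {G α : Type*} [Group G] [MulAction G α] {R : α → α → Prop}

theorem IsInvariantRel.isInvariantTolerance (hR : IsInvariantRel G R) :
    IsInvariantTolerance G (fun x y ↦ x = y ∨ R x y ∨ R y x) where
  isInvariantRel := fun g _ _ ↦ .imp (congrArg (g • ·)) (.imp (@hR g _ _) (@hR g _ _))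
  refl := fun _ ↦ .inl rfl
  symm := .imp Eq.symm Or.symm

namespace IsInvariantTolerance

theorem comp_self (hR : IsInvariantTolerance G R) : IsInvariantTolerance G (Relation.Comp R R) where
  isInvariantRel := fun g _ _ ⟨z, hxz, hzy⟩ ↦
    ⟨g • z, hR.isInvariantRel g hxz, hR.isInvariantRel g hzy⟩
  refl := fun x ↦ ⟨x, hR.refl x, hR.refl x⟩
  symm := fun ⟨z, hxz, hzy⟩ ↦ ⟨z, hR.symm hzy, hR.symm hxz⟩

theorem eq_or_not (hR : IsInvariantTolerance G R) :
    IsInvariantTolerance G (fun x y ↦ x = y ∨ ¬R x y) where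
  isInvariantRel := fun g _ _ ↦ .imp (congrArg (g • ·)) (mt (hR.isInvariantRel.smul_iff g).mp)
  refl := fun _ ↦ .inl rfl
  symm := .imp Eq.symm (mt hR.symm)

variable [Fintype α]

theorem card_row_comp_self_le [MulAction.IsPretransitive G α] (hR : IsInvariantTolerance G R)
    (x : α) : #{z | Relation.Comp R R x z} ≤
      #{z | R x z} + (#{z | R x z} - 1) * (#{z | R x z} - 2) := by
  let row (y : α) : Finset α := {z | R y z}
  have hsub : ({z | Relation.Comp R R x z} : Finset α) ⊆
      row x ∪ ((row x).erase x).biUnion fun y ↦ row y \ {x, y} := by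
    intro z hz
    obtain ⟨y, hxy, hyz⟩ : Relation.Comp R R x z := by simpa using hz
    by_cases hxz : R x z
    · simp [row, hxz]
    · have hyx : y ≠ x := by rintro rfl; exact hxz hyz
      have hzx : z ≠ x := by rintro rfl; exact hxz (hR.refl z)
      have hzy : z ≠ y := by rintro rfl; exact hxz hxy
      refine mem_union_right _ (mem_biUnion.mpr ⟨y, ?_, ?_⟩) <;> simp [row, *]
  have herase : #((row x).erase x) = #(row x) - 1 :=
    card_erase_of_mem (by simp [row, hR.refl x])
  have hnew : ∀ y ∈ (row x).erase x, #(row y \ {x, y}) ≤ #(row x) - 2 := fun y hy ↦ by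
    obtain ⟨hyx, hxy⟩ : y ≠ x ∧ R x y := by simpa [row] using hy
    rw [card_sdiff_of_subset (by simp [insert_subset_iff, row, hR.refl y, hR.symm hxy]),
      card_pair hyx.symm, hR.isInvariantRel.card_row_eq y x]
  calc #{z | Relation.Comp R R x z}
      ≤ #(row x) + #(((row x).erase x).biUnion fun y ↦ row y \ {x, y}) :=
        (card_le_card hsub).trans (card_union_le _ _)
    _ ≤ #(row x) + (#(row x) - 1) * (#(row x) - 2) := by
        rw [← herase]
        gcongr
        exact card_biUnion_le_card_mul _ _ _ hnew

end IsInvariantTolerance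

variable {α : Type*} [Fintype α] {G : Subgroup (Perm α)} [MulAction.IsPreprimitive G α]
  {R : α → α → Prop} {k : ℕ}

/-- A maximal tolerance with small rows is transitive, since its square has small rows too. -/
theorem IsInvariantTolerance.eq_of_card_row_le (hR : IsInvariantTolerance G R)
    (hgap : HasRowGap G k) (hk : 2 ≤ k) (hn : (k + 1) ^ 2 ≤ Fintype.card α) {x : α}
    (hx : #{z | R x z} ≤ k + 1) {a b : α} (hab : R a b) : a = b := by
  obtain ⟨S, hRS, hS⟩ := (Set.toFinite {S : α → α → Prop |
    IsInvariantTolerance G S ∧ #{z | S x z} ≤ k + 1}).exists_le_maximal ⟨hR, hx⟩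
  obtain ⟨hStol, hSx⟩ := hS.prop
  have hcomp : #{z | Relation.Comp S S x z} ≤ k + 1 := by
    have hle := hStol.card_row_comp_self_le x
    have hsq : (#{z | S x z} - 1) * (#{z | S x z} - 2) ≤ k * (k - 1) :=
      Nat.mul_le_mul (by omega) (by omega)
    have : k * (k - 1) + 2 * k + 2 < (k + 1) ^ 2 := by
      obtain ⟨j, rfl⟩ := Nat.exists_eq_add_of_le' hk
      simp only [Nat.add_succ_sub_one]
      nlinarith
    exact (hgap _ hStol.comp_self.isInvariantRel x).resolve_right (by omega)
  have htrans : Relation.Comp S S ≤ S :=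
    hS.le_of_ge ⟨hStol.comp_self, hcomp⟩ fun y z hyz ↦ ⟨y, hStol.refl y, hyz⟩
  have heqv : Equivalence S :=
    ⟨hStol.refl, hStol.symm, fun {y z w} hyz hzw ↦ htrans y w ⟨z, hyz, hzw⟩⟩
  refine (hStol.isInvariantRel.eq_or_forall_of_equivalence heqv).resolve_right (fun hall ↦ ?_)
    a b (hRS a b hab)
  have : Fintype.card α ≤ k + 1 := by simpa [hall] using hSx
  nlinarith

theorem IsInvariantTolerance.eq_or_forall (hR : IsInvariantTolerance G R)
    (hgap : HasRowGap G k) (hk : 2 ≤ k) (hn : (k + 1) ^ 2 ≤ Fintype.card α) :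
    (∀ a b, R a b → a = b) ∨ ∀ a b, R a b := by
  by_contra! hcon
  obtain ⟨⟨a, b, hab, hne⟩, c, d, hcd⟩ := hcon
  obtain ⟨S, hS, hSR⟩ : ∃ S, IsInvariantTolerance G S ∧ ∀ x y, S x y ↔ x = y ∨ ¬R x y :=
    ⟨_, hR.eq_or_not, fun _ _ ↦ .rfl⟩
  have hrow : ¬#{z | R a z} ≤ k + 1 := fun h ↦ hne (hR.eq_of_card_row_le hgap hk hn h hab)
  have hSrow : ¬#{z | S a z} ≤ k + 1 := fun h ↦ hcd <| by
    rw [hS.eq_of_card_row_le hgap hk hn h ((hSR c d).mpr (.inr hcd))]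
    exact hR.refl d
  have hcompl : #{z | S a z} = #{z | ¬R a z} + 1 := by
    rw [← card_insert_of_notMem (a := a) (by simp [hR.refl a])]
    congr 1
    ext z
    simp [hSR, eq_comm]
  have hadd : #{z | R a z} + #{z | ¬R a z} = Fintype.card α :=
    card_filter_add_card_filter_not (s := univ) (R a)
  have hlarge := (hgap R hR.isInvariantRel a).resolve_left hrow
  have hSlarge := (hgap S hS.isInvariantRel a).resolve_left hSrow
  have : 2 * k + 4 ≤ (k + 1) ^ 2 := by nlinarith
  omega

theorem card_le_card_row_add_of_irrefl (hR : IsInvariantRel G R) (hirr : ∀ x, ¬R x x)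
    {x y : α} (hxy : R x y) (hgap : HasRowGap G k) (hk : 2 ≤ k)
    (hn : (k + 1) ^ 2 ≤ Fintype.card α) : Fintype.card α ≤ #{z | R x z} + (k + 1) := by
  refine (hgap R hR x).resolve_left fun hsmall ↦ ?_
  have hall := (hR.isInvariantTolerance.eq_or_forall hgap hk hn).resolve_left fun heq ↦
    hirr x (by rwa [← heq x y (.inr (.inl hxy))] at hxy)
  have hcover : univ ⊆ insert x (({z | R x z} : Finset α) ∪ ({z | R z x} : Finset α)) :=
    fun z _ ↦ by simpa [eq_comm] using hall x z
  have hcard : Fintype.card α ≤ #{z | R x z} + #{z | R z x} + 1 :=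
    (card_le_card hcover).trans <|
      (card_insert_le _ _).trans (Nat.succ_le_succ (card_union_le _ _))
  rw [hR.card_col_eq_card_row x x] at hcard
  nlinarith

theorem isMultiplyPretransitive_two_of_hasRowGap (hgap : HasRowGap G k) (hk : 2 ≤ k)
    (hn : (k + 1) ^ 2 ≤ Fintype.card α) : MulAction.IsMultiplyPretransitive G α 2 := by
  rw [MulAction.is_two_pretransitive_iff]
  intro a b c d hab hcd
  by_contra! hno
  have hinv (u v : α) : IsInvariantRel G (orbital G u v) := fun g _ _ ⟨h, hu, hv⟩ ↦
    ⟨g * h, by rw [mul_smul, hu], by rw [mul_smul, hv]⟩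
  have hirr {u v : α} (huv : u ≠ v) (x : α) : ¬orbital G u v x x := fun ⟨h, hu, hv⟩ ↦
    huv (MulAction.injective h (hu.trans hv.symm))
  have hlarge {u v : α} (huv : u ≠ v) : Fintype.card α ≤ #{z | orbital G u v a z} + (k + 1) := by
    rw [(hinv u v).card_row_eq a u]
    exact card_le_card_row_add_of_irrefl (hinv u v) (hirr huv) ⟨1, one_smul _ _, one_smul _ _⟩
      hgap hk hn
  have hdisj :
      Disjoint ({z | orbital G a b a z} : Finset α) ({z | orbital G c d a z} : Finset α) := by
    rw [disjoint_filter]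
    rintro z - ⟨g, hga, hgb⟩ ⟨h, hhc, hhd⟩
    exact hno (h⁻¹ * g) (by rw [mul_smul, hga, ← hhc, inv_smul_smul])
      (by rw [mul_smul, hgb, ← hhd, inv_smul_smul])
  have hcard := card_le_univ
    (({z | orbital G a b a z} : Finset α) ∪ ({z | orbital G c d a z} : Finset α))
  rw [card_union_of_disjoint hdisj] at hcard
  have := hlarge hab
  have := hlarge hcd
  nlinarith

end Tolerance

section TripleRel

/-- A relation between distinct triples of points preserved by the action of `G`, that is, a union
of orbits of `G` on such triples. -/
structure IsInvariantTripleRel (G : Type*) {α : Type*} [SMul G α] (Q : α → α → α → Prop) :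
    Prop where
  smul : ∀ (g : G) {x y z : α}, Q x y z → Q (g • x) (g • y) (g • z)
  ne : ∀ {x y z : α}, Q x y z → x ≠ y ∧ x ≠ z ∧ y ≠ z

namespace IsInvariantTripleRel

variable {G α : Type*} [Group G] [MulAction G α] {Q : α → α → α → Prop}

theorem smul_iff (hQ : IsInvariantTripleRel G Q) (g : G) {x y z : α} :
    Q (g • x) (g • y) (g • z) ↔ Q x y z :=
  ⟨fun h ↦ by simpa using hQ.smul g⁻¹ h, hQ.smul g⟩

theorem swap_left (hQ : IsInvariantTripleRel G Q) : IsInvariantTripleRel G fun x y z ↦ Q y x z where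
  smul := fun g _ _ _ ↦ hQ.smul g
  ne := fun h ↦ ⟨(hQ.ne h).1.symm, (hQ.ne h).2.2, (hQ.ne h).2.1⟩

theorem swap_right (hQ : IsInvariantTripleRel G Q) :
    IsInvariantTripleRel G fun x y z ↦ Q x z y where
  smul := fun g _ _ _ ↦ hQ.smul g
  ne := fun h ↦ ⟨(hQ.ne h).2.1, (hQ.ne h).1, (hQ.ne h).2.2.symm⟩

theorem compl (hQ : IsInvariantTripleRel G Q) :
    IsInvariantTripleRel G fun x y z ↦ (x ≠ y ∧ x ≠ z ∧ y ≠ z) ∧ ¬Q x y z where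
  smul := fun g x y z ↦ .imp (by simp) (mt (hQ.smul_iff g).mp)
  ne := And.left

variable [Fintype α] [MulAction.IsMultiplyPretransitive G α 2]

theorem card_row_eq (hQ : IsInvariantTripleRel G Q) {x y x' y' : α} (hxy : x ≠ y)
    (hxy' : x' ≠ y') : #{z | Q x y z} = #{z | Q x' y' z} := by
  obtain ⟨g, rfl, rfl⟩ := MulAction.is_two_pretransitive_iff.mp ‹_› hxy hxy'
  refine card_equiv (MulAction.toPerm g) fun z ↦ ?_
  simp [hQ.smul_iff]

theorem card_mid_eq_card_row (hQ : IsInvariantTripleRel G Q) {x y x' y' : α} (hxy : x ≠ y)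
    (hxy' : x' ≠ y') : #{z | Q x z y} = #{z | Q x' y' z} := by
  have hrow : ∀ z ∈ univ.erase x, #{w ∈ univ.erase x | Q x z w} = #{w | Q x' y' w} := by
    intro z hz
    rw [hQ.card_row_eq hxy' (ne_of_mem_erase hz).symm]
    congr 1
    ext w
    simpa using fun h ↦ (hQ.ne h).2.1.symm
  have hmid : ∀ z ∈ univ.erase x, #{w ∈ univ.erase x | Q x w z} = #{w | Q x w y} := by
    intro z hz
    rw [hQ.swap_right.card_row_eq hxy (ne_of_mem_erase hz).symm]
    congr 1
    ext w
    simpa using fun h ↦ (hQ.ne h).1.symm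
  have hpos : 0 < #(univ.erase x) := card_pos.mpr ⟨y, by simpa using hxy.symm⟩
  exact (Nat.eq_of_mul_eq_mul_left hpos (card_mul_eq_card_mul (Q x) hrow hmid)).symm

theorem card_left_eq_card_row (hQ : IsInvariantTripleRel G Q) {x y x' y' : α} (hxy : x ≠ y)
    (hxy' : x' ≠ y') : #{z | Q z x y} = #{z | Q x' y' z} := by
  rw [hQ.swap_left.card_mid_eq_card_row hxy hxy'.symm]

theorem card_pairs_fst_mem (hQ : IsInvariantTripleRel G Q) {w x : α} (hwx : w ≠ x)
    {s : Finset α} (hs : x ∉ s) : #{p : α × α | Q p.1 x p.2 ∧ p.1 ∈ s} = #s * #{z | Q w x z} := by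
  rw [card_eq_sum_card_fiberwise (f := Prod.fst) (t := s) fun p hp ↦ by
    exact_mod_cast (mem_filter.mp hp).2.2]
  refine sum_const_nat fun v hv ↦ ?_
  rw [hQ.card_row_eq hwx (ne_of_mem_of_not_mem hv hs)]
  refine card_bij' (fun p _ ↦ p.2) (fun z _ ↦ (v, z)) ?_ ?_ ?_ ?_
  · rintro ⟨_, z⟩ hp
    obtain ⟨hQp, rfl⟩ := mem_filter.mp hp
    simpa using (mem_filter.mp hQp).2.1
  · exact fun z hz ↦ by simpa [hv] using hz
  · rintro ⟨_, z⟩ hp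
    obtain ⟨-, rfl⟩ := mem_filter.mp hp
    rfl
  · exact fun _ _ ↦ rfl

theorem card_pairs_snd_mem (hQ : IsInvariantTripleRel G Q) {w x : α} (hwx : w ≠ x)
    {s : Finset α} (hs : x ∉ s) : #{p : α × α | Q p.1 x p.2 ∧ p.2 ∈ s} = #s * #{z | Q w x z} := by
  rw [← hQ.card_left_eq_card_row hwx.symm hwx,
    ← hQ.swap_left.swap_right.swap_left.card_pairs_fst_mem hwx hs]
  exact card_equiv (Equiv.prodComm α α) fun p ↦ by simp

theorem card_pairs_eq (hQ : IsInvariantTripleRel G Q) {w x : α} (hwx : w ≠ x) :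
    #{p : α × α | Q p.1 x p.2} = (Fintype.card α - 1) * #{z | Q w x z} := by
  rw [← card_univ, ← card_erase_of_mem (mem_univ x),
    ← hQ.card_pairs_fst_mem hwx (notMem_erase x univ)]
  congr 1
  ext p
  simpa using fun h ↦ (hQ.ne h).1

theorem sum_card_pairs_diff (hQ : IsInvariantTripleRel G Q) {w x : α} (hwx : w ≠ x) :
    ∑ y, #{p : α × α | Q p.1 x p.2 ∧ ¬Q p.1 y p.2} =
      (Fintype.card α - 1) * #{z | Q w x z} * (Fintype.card α - #{z | Q w x z}) := by
  rw [← hQ.card_pairs_eq hwx]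
  simpa only [filter_filter, card_univ] using
    sum_card_filter_not (s := univ) (t := {p : α × α | Q p.1 x p.2})
      (R := fun y p ↦ Q p.1 y p.2)
      fun p hp ↦ hQ.card_mid_eq_card_row (hQ.ne (by simpa using hp)).2.1 hwx

theorem sum_card_row_diff (hQ : IsInvariantTripleRel G Q) {w x : α} (hwx : w ≠ x) :
    ∑ y ∈ univ.erase w, #{z | Q w x z ∧ ¬Q w y z} =
      #{z | Q w x z} * (Fintype.card α - 1 - #{z | Q w x z}) := by
  rw [← card_univ, ← card_erase_of_mem (mem_univ w)]
  simpa only [filter_filter] using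
    sum_card_filter_not (s := univ.erase w) (t := {z | Q w x z}) (R := Q w) fun z hz ↦ by
      rw [← hQ.card_mid_eq_card_row (hQ.ne (by simpa using hz)).2.1 hwx]
      congr 1
      ext y
      simpa using fun h ↦ (hQ.ne h).1.symm

end IsInvariantTripleRel

variable {α : Type*} [Fintype α] {G : Subgroup (Perm α)} [MulAction.IsMultiplyPretransitive G α 2]
  {Q : α → α → α → Prop} {k : ℕ}

theorem IsInvariantTripleRel.card_pairs_diff_le (hQ : IsInvariantTripleRel G Q) {w x : α}
    (hwx : w ≠ x) {h : Perm α} (hh : h ∈ G) (hx : h x ≠ x) :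
    #{p : α × α | Q p.1 x p.2 ∧ ¬Q p.1 (h x) p.2} ≤
      2 * ((2 * permIndex h - 1) * #{z | Q w x z}) := by
  let s := h.support.erase x
  have hs : x ∉ s := notMem_erase x _
  have hscard : #s ≤ 2 * permIndex h - 1 := by
    rw [card_erase_of_mem (Perm.mem_support.mpr hx)]
    exact Nat.sub_le_sub_right (card_support_le_two_mul_permIndex h) 1
  have hsub : ({p : α × α | Q p.1 x p.2 ∧ ¬Q p.1 (h x) p.2} : Finset (α × α)) ⊆
      ({p : α × α | Q p.1 x p.2 ∧ p.1 ∈ s} : Finset (α × α)) ∪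
        ({p : α × α | Q p.1 x p.2 ∧ p.2 ∈ s} : Finset (α × α)) := by
    intro p hp
    obtain ⟨hpx, hphx⟩ : Q p.1 x p.2 ∧ ¬Q p.1 (h x) p.2 := by simpa using hp
    obtain ⟨hne₁, -, hne₂⟩ := hQ.ne hpx
    have : h p.1 ≠ p.1 ∨ h p.2 ≠ p.2 := by
      by_contra! hfix
      have := hQ.smul ⟨h, hh⟩ hpx
      simp only [Subgroup.smul_def, Perm.smul_def, hfix] at this
      exact hphx this
    simpa [s, hpx, hne₁, hne₂.symm] using this
  calc #{p : α × α | Q p.1 x p.2 ∧ ¬Q p.1 (h x) p.2}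
      ≤ #s * #{z | Q w x z} + #s * #{z | Q w x z} := by
        nth_rw 1 [← hQ.card_pairs_fst_mem hwx hs]
        rw [← hQ.card_pairs_snd_mem hwx hs]
        exact (card_le_card hsub).trans (card_union_le _ _)
    _ ≤ 2 * ((2 * permIndex h - 1) * #{z | Q w x z}) := by
        rw [← two_mul]
        gcongr

theorem smallIndexGraph_eq_top {g : Perm α} (hg : g ∈ G) (hg1 : g ≠ 1) (hgk : permIndex g ≤ k) :
    smallIndexGraph G k = ⊤ := by
  obtain ⟨u, hu⟩ : ∃ x, g x ≠ x := by simpa [Perm.ext_iff] using hg1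
  have hadj : (smallIndexGraph G k).Adj u (g u) := ⟨hu.symm, g, hg, hgk, rfl⟩
  ext x y
  refine ⟨SimpleGraph.Adj.ne, fun hxy ↦ ?_⟩
  obtain ⟨c, rfl, rfl⟩ := MulAction.is_two_pretransitive_iff.mp ‹_› hu.symm hxy
  exact isInvariantRel_smallIndexGraph_adj c hadj

theorem IsInvariantTripleRel.card_le_card_row_add (hQ : IsInvariantTripleRel G Q)
    (htop : smallIndexGraph G k = ⊤) (hk : 0 < k) {w x z : α} (hz : Q w x z) :
    Fintype.card α + 2 ≤ #{z | Q w x z} + 4 * k := by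
  have hwx : w ≠ x := (hQ.ne hz).1
  set ρ := #{z | Q w x z}
  have hρpos : 0 < ρ := card_pos.mpr ⟨z, by simpa using hz⟩
  have hterm : ∀ y ∈ univ.erase x, #{p : α × α | Q p.1 x p.2 ∧ ¬Q p.1 y p.2} ≤
      2 * ((2 * k - 1) * ρ) := by
    intro y hy
    obtain ⟨h, hh, hhk, rfl⟩ := exists_permIndex_le_apply_eq htop (ne_of_mem_erase hy).symm
    exact (hQ.card_pairs_diff_le hwx hh (ne_of_mem_erase hy)).trans (by gcongr)
  have hcard : #(univ.erase x) = Fintype.card α - 1 := card_erase_of_mem (mem_univ x)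
  have hpos : 0 < Fintype.card α - 1 := by
    rw [← hcard]
    exact card_pos.mpr ⟨w, by simpa using hwx⟩
  have hsum : (Fintype.card α - 1) * ρ * (Fintype.card α - ρ) ≤
      (Fintype.card α - 1) * ρ * (2 * (2 * k - 1)) :=
    calc (Fintype.card α - 1) * ρ * (Fintype.card α - ρ)
        = ∑ y ∈ univ.erase x, #{p : α × α | Q p.1 x p.2 ∧ ¬Q p.1 y p.2} := by
          rw [sum_erase _ (by simp), hQ.sum_card_pairs_diff hwx]
      _ ≤ (Fintype.card α - 1) * (2 * ((2 * k - 1) * ρ)) :=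
          hcard ▸ sum_le_card_nsmul _ _ _ hterm
      _ = (Fintype.card α - 1) * ρ * (2 * (2 * k - 1)) := by ring
  have := Nat.le_of_mul_le_mul_left hsum (Nat.mul_pos hpos hρpos)
  omega

/-- The triples `(w, x, y)` such that no `h ∈ G` of index at most `k` fixing `w` maps `x` to `y`
form an invariant relation with too few elements in each row to be nonempty. -/
theorem exists_permIndex_le_apply_eq_of_fixes (htop : smallIndexGraph G k = ⊤)
    (hk : 0 < k) (hn : (k + 1) ^ 2 ≤ Fintype.card α) {w x y : α} (hwx : w ≠ x) (hwy : w ≠ y)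
    (hxy : x ≠ y) : ∃ h ∈ G, permIndex h ≤ k ∧ h w = w ∧ h x = y := by
  obtain ⟨Q, hQdef⟩ : ∃ Q : α → α → α → Prop, ∀ w x y, Q w x y ↔ (w ≠ x ∧ w ≠ y ∧ x ≠ y) ∧
      ¬∃ h ∈ G, permIndex h ≤ k ∧ h w = w ∧ h x = y := ⟨_, fun _ _ _ ↦ .rfl⟩
  have hQ : IsInvariantTripleRel G Q := by
    refine ⟨fun c w x y ↦ ?_, fun h ↦ ((hQdef _ _ _).mp h).1⟩
    rw [hQdef, hQdef]
    refine .imp (by simp) (mt fun ⟨h, hh, hhk, hw, hx⟩ ↦ ?_)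
    exact ⟨c⁻¹ * h * c⁻¹⁻¹, mul_mem (mul_mem (inv_mem c.2) hh) (inv_mem (inv_mem c.2)),
      (permIndex_conj_le h _).trans hhk, by simp_all [Subgroup.smul_def],
      by simp_all [Subgroup.smul_def]⟩
  by_contra hno
  have hlarge := hQ.card_le_card_row_add htop hk ((hQdef w x y).mpr ⟨⟨hwx, hwy, hxy⟩, hno⟩)
  have hsmall : #{z | Q w x z} + 2 ≤ 2 * k := by
    obtain ⟨h, hh, hhk, rfl⟩ := exists_permIndex_le_apply_eq htop hxy
    have hsupp : {x, h x} ⊆ h.support := by simpa [insert_subset_iff] using hxy.symm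
    have hsub : ({z | Q z x (h x)} : Finset α) ⊆ h.support \ {x, h x} := fun z hz ↦ by
      obtain ⟨⟨hzx, hzhx, -⟩, hz⟩ := (hQdef _ _ _).mp (mem_filter.mp hz).2
      have : h z ≠ z := fun hfix ↦ hz ⟨h, hh, hhk, hfix, rfl⟩
      simpa [hzx, hzhx] using this
    calc #{z | Q w x z} + 2
      _ = #{z | Q z x (h x)} + #{x, h x} := by
          rw [hQ.card_left_eq_card_row hxy hwx, card_pair hxy]
      _ ≤ #(h.support \ {x, h x}) + #{x, h x} := by gcongr
      _ = #h.support := card_sdiff_add_card_eq_card hsupp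
      _ ≤ 2 * k := (card_support_le_two_mul_permIndex h).trans (by gcongr)
  zify at hlarge hsmall hn
  nlinarith [sq_nonneg ((k : ℤ) - 2)]

theorem IsInvariantTripleRel.card_row_mul_le (hQ : IsInvariantTripleRel G Q)
    (htop : smallIndexGraph G k = ⊤) (hk : 0 < k) (hn : (k + 1) ^ 2 ≤ Fintype.card α) {w x : α}
    (hwx : w ≠ x) :
    #{z | Q w x z} * (Fintype.card α - 1 - #{z | Q w x z}) ≤ (Fintype.card α - 2) * k := by
  have hcard : #((univ.erase w).erase x) = Fintype.card α - 2 := by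
    rw [card_erase_of_mem (by simpa using hwx.symm), card_erase_of_mem (mem_univ w), card_univ]
    rfl
  rw [← hQ.sum_card_row_diff hwx, ← sum_erase _ (a := x) (by simp), ← hcard]
  refine sum_le_card_nsmul _ _ _ fun y hy ↦ ?_
  obtain ⟨hyx, hyw⟩ : y ≠ x ∧ y ≠ w := by simpa using hy
  obtain ⟨h, hh, hhk, hw, rfl⟩ :=
    exists_permIndex_le_apply_eq_of_fixes htop hk hn hwx hyw.symm hyx.symm
  have hrow : ∀ z, Q w (h x) z ↔ Q w x (h.symm z) := fun z ↦ by
    simpa [Subgroup.smul_def, hw] using hQ.smul_iff ⟨h, hh⟩ (x := w) (y := x) (z := h.symm z)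
  simp only [hrow]
  exact (card_filter_and_not_le_permIndex h (Q w x)).trans hhk

theorem mul_lt_mul_of_row_bounds {n k ρ σ : ℕ} (hk : 2 ≤ k) (hn : (k + 1) ^ 2 ≤ n)
    (hρσ : ρ + σ + 2 = n) (hρ : n + 2 ≤ ρ + 4 * k) (hσ : n + 2 ≤ σ + 4 * k) :
    (n - 2) * k < ρ * (n - 1 - ρ) := by
  have hkρ : k + 1 ≤ ρ := by nlinarith
  have hkσ : k + 1 ≤ σ := by nlinarith
  obtain ⟨r, rfl⟩ := Nat.exists_eq_add_of_le hkρ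
  obtain ⟨s, rfl⟩ := Nat.exists_eq_add_of_le hkσ
  obtain rfl : n = r + s + 2 * k + 4 := by omega
  rw [show r + s + 2 * k + 4 - 1 - (k + 1 + r) = k + 2 + s by omega,
    show r + s + 2 * k + 4 - 2 = r + s + 2 * k + 2 by omega]
  nlinarith [Nat.zero_le (r * s)]

/-- The orbit of the triple `(u, v, w)` under `G`, as a relation. -/
def tripleOrbital (G : Type*) {α : Type*} [SMul G α] (u v w a b c : α) : Prop :=
  ∃ g : G, g • u = a ∧ g • v = b ∧ g • w = c

theorem tripleOrbital_of_ne (htop : smallIndexGraph G k = ⊤) (hk : 2 ≤ k)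
    (hn : (k + 1) ^ 2 ≤ Fintype.card α) {u v w a b c : α} (huvw : u ≠ v ∧ u ≠ w ∧ v ≠ w)
    (habc : a ≠ b ∧ a ≠ c ∧ b ≠ c) : tripleOrbital G u v w a b c := by
  by_contra hno
  have hQ : IsInvariantTripleRel G (tripleOrbital G u v w) :=
    { smul := fun g _ _ _ ⟨h, hu, hv, hw⟩ ↦
        ⟨g * h, by rw [mul_smul, hu], by rw [mul_smul, hv], by rw [mul_smul, hw]⟩
      ne := by
        rintro _ _ _ ⟨h, rfl, rfl, rfl⟩
        simpa using huvw }
  obtain ⟨Q, hQ', hQdef⟩ : ∃ Q, IsInvariantTripleRel G Q ∧ ∀ x y z, Q x y z ↔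
      (x ≠ y ∧ x ≠ z ∧ y ≠ z) ∧ ¬tripleOrbital G u v w x y z := ⟨_, hQ.compl, fun _ _ _ ↦ .rfl⟩
  have hcard : #{z | tripleOrbital G u v w u v z} + #{z | Q u v z} + 2 = Fintype.card α := by
    have hpair : {u, v} ⊆ ({z | ¬tripleOrbital G u v w u v z} : Finset α) := by
      simpa [insert_subset_iff] using ⟨fun h ↦ (hQ.ne h).2.1 rfl, fun h ↦ (hQ.ne h).2.2 rfl⟩
    have hrow : ({z | Q u v z} : Finset α) =
        ({z | ¬tripleOrbital G u v w u v z} : Finset α) \ {u, v} := by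
      ext z
      simp [hQdef, huvw.1, eq_comm, and_comm]
    rw [hrow, ← card_pair huvw.1, add_assoc, card_sdiff_add_card_eq_card hpair,
      card_filter_add_card_filter_not, card_univ]
  have hlarge := hQ.card_le_card_row_add htop (by omega)
    (show tripleOrbital G u v w u v w from ⟨1, by simp⟩)
  have hlarge' := hQ'.card_le_card_row_add htop (by omega) ((hQdef _ _ _).mpr ⟨habc, hno⟩)
  rw [hQ'.card_row_eq habc.1 huvw.1] at hlarge'
  exact (mul_lt_mul_of_row_bounds hk hn hcard hlarge hlarge').not_ge
    (hQ.card_row_mul_le htop (by omega) hn huvw.1)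

end TripleRel

section Averaging

variable {α : Type*} [DecidableEq α]

theorem card_mul_card_filter_smul_mem {H : Type*} [Group H] [Fintype H] [MulAction H α]
    {B T : Finset α} {s : α} (hB : ∀ t, t ∈ B ↔ ∃ h : H, h • s = t) (hT : T ⊆ B) :
    #B * #{h : H | h • s ∈ T} = #T * Fintype.card H := by
  have hfiber : ∀ t ∈ B, #{h : H | h • s = t} = #{h : H | h • s = s} := by
    intro t ht
    obtain ⟨g, rfl⟩ := (hB t).mp ht
    refine card_bij' (fun h _ ↦ g⁻¹ * h) (fun h _ ↦ g * h) ?_ ?_ ?_ ?_ <;>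
      simp +contextual [mul_smul]
  have hcount : ∀ U ⊆ B, #{h : H | h • s ∈ U} = #U * #{h : H | h • s = s} := by
    intro U hU
    rw [card_eq_sum_card_fiberwise (f := (· • s)) (t := U) fun h hh ↦ by simpa using hh]
    refine sum_const_nat fun t ht ↦ ?_
    rw [filter_filter, ← hfiber t (hU ht)]
    exact congrArg card (filter_congr fun h _ ↦ ⟨And.right, fun h ↦ ⟨h ▸ ht, h⟩⟩)
  have hall : #{h : H | h • s ∈ B} = Fintype.card H := by
    rw [filter_true_of_mem fun h _ ↦ (hB _).mpr ⟨h, rfl⟩, card_univ]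
  rw [← hall, hcount B subset_rfl, hcount T hT]
  ring

theorem exists_card_mul_card_filter_smul_mem_le {H : Type*} [Group H] [Finite H] [MulAction H α]
    {B S T : Finset α} (hB : ∀ s ∈ S, ∀ t, t ∈ B ↔ ∃ h : H, h • s = t) (hT : T ⊆ B) :
    ∃ h : H, #B * #{s ∈ S | h • s ∈ T} ≤ #S * #T := by
  have := Fintype.ofFinite H
  have hswap : ∑ h : H, #{s ∈ S | h • s ∈ T} = ∑ s ∈ S, #{h : H | h • s ∈ T} :=
    (sum_card_bipartiteAbove_eq_sum_card_bipartiteBelow fun s (h : H) ↦ h • s ∈ T).symm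
  have hsum : ∑ h : H, #B * #{s ∈ S | h • s ∈ T} = ∑ _h : H, #S * #T := by
    rw [← mul_sum, hswap, mul_sum,
      sum_const_nat fun s hs ↦ card_mul_card_filter_smul_mem (hB s hs) hT, sum_const, card_univ,
      smul_eq_mul]
    ring
  simpa using exists_le_of_sum_le univ_nonempty hsum.le

end Averaging

section ThreeTransitive

theorem is_three_pretransitive_iff {M α : Type*} [Group M] [MulAction M α] :
    MulAction.IsMultiplyPretransitive M α 3 ↔
      ∀ {u v w a b c : α}, (u ≠ v ∧ u ≠ w ∧ v ≠ w) → (a ≠ b ∧ a ≠ c ∧ b ≠ c) →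
        tripleOrbital M u v w a b c := by
  have hemb : ∀ {a b c : α}, (a ≠ b ∧ a ≠ c ∧ b ≠ c) → Function.Injective ![a, b, c] := by
    rintro a b c ⟨hab, hac, hbc⟩ i j
    fin_cases i <;> fin_cases j <;> simp [hab, hac, hbc, hab.symm, hac.symm, hbc.symm]
  constructor
  · intro _ u v w a b c huvw habc
    obtain ⟨g, hg⟩ := MulAction.exists_smul_eq M (⟨_, hemb huvw⟩ : Fin 3 ↪ α) ⟨_, hemb habc⟩
    have happly (i : Fin 3) := DFunLike.congr_fun hg i
    exact ⟨g, happly 0, happly 1, happly 2⟩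
  · refine fun H ↦ ⟨fun e f ↦ ?_⟩
    have hne (e : Fin 3 ↪ α) : e 0 ≠ e 1 ∧ e 0 ≠ e 2 ∧ e 1 ≠ e 2 := by simp
    obtain ⟨g, h₀, h₁, h₂⟩ := H (hne e) (hne f)
    refine ⟨g, ?_⟩
    ext i
    fin_cases i
    exacts [h₀, h₁, h₂]

variable {α : Type*} [Fintype α] {G : Subgroup (Perm α)} [MulAction.IsMultiplyPretransitive G α 3]

theorem exists_apply_eq_apply_eq_of_card {a b c : α} (hn : 3 ≤ Fintype.card α) (hac : a ≠ c)
    (hab : a ≠ b) : ∃ x ∈ G, x a = a ∧ x c = b := by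
  have := MulAction.isMultiplyPretransitive_of_le (G := G) (α := α) (m := 2) (n := 3) (by simp)
    (by simpa)
  obtain ⟨x, hx⟩ := MulAction.is_two_pretransitive_iff.mp this hac hab
  exact ⟨x, x.2, hx⟩

variable [DecidableEq α]

theorem mem_compl_pair_iff_exists_smul_eq {a b s t : α} (hab : a ≠ b) (hsa : a ≠ s) (hsb : b ≠ s) :
    t ∈ ({a, b}ᶜ : Finset α) ↔
      ∃ h : ↥(MulAction.stabilizer G a ⊓ MulAction.stabilizer G b), h • s = t := by
  simp only [mem_compl, mem_insert, mem_singleton, not_or]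
  constructor
  · rintro ⟨hta, htb⟩
    obtain ⟨h, hha, hhb, hhs⟩ := is_three_pretransitive_iff.mp ‹_› ⟨hab, hsa, hsb⟩
      ⟨hab, Ne.symm hta, Ne.symm htb⟩
    exact ⟨⟨h, hha, hhb⟩, hhs⟩
  · rintro ⟨⟨h, hha, hhb⟩, rfl⟩
    exact ⟨fun hs ↦ hsa (MulAction.injective h (hha.trans hs.symm)),
      fun hs ↦ hsb (MulAction.injective h (hhb.trans hs.symm))⟩

/-- Elements fixing `a` and `b` are transitive on the other points, so translating `x` by them
makes the images of the points of `S` other than `a` equidistributed outside `{a, b}`. -/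
theorem exists_card_mul_card_filter_mem_le {S : Finset α} {a b c : α} (ha : a ∈ S) (hb : b ∈ S)
    (hab : a ≠ b) (hc : c ∉ S) :
    ∃ x ∈ G, x a = a ∧ x c = b ∧
      (Fintype.card α - 2) * #{t ∈ S.erase a | x t ∈ S} ≤ (#S - 1) * (#S - 2) := by
  have hpair : {a, b} ⊆ S := by simp [insert_subset_iff, ha, hb]
  have hn : 3 ≤ Fintype.card α := by
    have := card_le_card hpair
    have := card_lt_univ_of_notMem hc
    grind [card_pair hab]
  obtain ⟨x, hx, hxa, hxc⟩ :=
    exists_apply_eq_apply_eq_of_card (G := G) hn (ne_of_mem_of_not_mem ha hc) hab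
  have hxS : ∀ t ∈ S.erase a, a ≠ x t ∧ b ≠ x t := by
    intro t ht
    rw [mem_erase] at ht
    exact ⟨fun h ↦ ht.1 (x.injective (h.symm.trans hxa.symm)),
      fun h ↦ ne_of_mem_of_not_mem ht.2 hc (x.injective (h.symm.trans hxc.symm))⟩
  obtain ⟨⟨⟨h, hhG⟩, hha, hhb⟩, hle⟩ := exists_card_mul_card_filter_smul_mem_le
    (S := (S.erase a).image x) (T := S \ {a, b})
    (forall_mem_image.mpr fun t ht _ ↦
      mem_compl_pair_iff_exists_smul_eq (G := G) hab (hxS t ht).1 (hxS t ht).2)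
    fun _ ↦ by simp +contextual
  replace hha : h a = a := hha
  replace hhb : h b = b := hhb
  have himage : ({t ∈ S.erase a | (h * x) t ∈ S} : Finset α).image x ⊆
      ({s ∈ (S.erase a).image x | h s ∈ S \ {a, b}} : Finset α) := by
    refine image_subset_iff.mpr fun t ht ↦ ?_
    rw [mem_filter] at ht
    obtain ⟨ht, htS⟩ := ht
    have hhx (y : α) (hy : h y = y) (hne : y ≠ x t) : h (x t) ≠ y :=
      fun h' ↦ hne (h.injective (hy.trans h'.symm))
    rw [mem_filter, mem_sdiff, mem_insert, mem_singleton, not_or]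
    exact ⟨mem_image_of_mem x ht, htS, hhx a hha (hxS t ht).1, hhx b hhb (hxS t ht).2⟩
  refine ⟨h * x, G.mul_mem hhG hx, by simp [hxa, hha], by simp [hxc, hhb], ?_⟩
  rw [card_compl, card_pair hab, card_image_of_injective _ x.injective, card_erase_of_mem ha,
    card_sdiff_of_subset hpair, card_pair hab] at hle
  refine (Nat.mul_le_mul_left _ ?_).trans hle
  rw [← card_image_of_injective _ x.injective]
  exact card_le_card himage

end ThreeTransitive

section Interaction
open scoped commutatorElement

variable {α : Type*} [DecidableEq α]

theorem card_image_union_image_le (g h : α → α) (J : Finset α) :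
    #(J.image g ∪ J.image h) ≤ 2 * #J := by
  grw [card_union_le, card_image_le, card_image_le, two_mul]

variable [Fintype α] {g h : Perm α}

/-- The points moved by both `g` and `h`, together with their images under `g` and under `h`. It
bounds the support of the commutator of `g` and `h`. -/
def interaction (g h : Perm α) : Finset α :=
  g.support ∩ h.support ∪ ((g.support ∩ h.support).image g ∪ (g.support ∩ h.support).image h)

theorem support_commutator_subset (g h : Perm α) : ⁅g, h⁆.support ⊆ interaction g h := by
  intro z hz
  rw [Perm.mem_support, commutatorElement_def] at hz
  contrapose! hz
  simp only [interaction, mem_union, mem_inter, Perm.mem_support, mem_image, not_or, not_exists,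
    not_and_or, not_not] at hz
  obtain ⟨hz, hgz, hhz⟩ := hz
  have hgz' := hgz (g.symm z)
  have hhz' := hhz (h.symm z)
  simp only [Perm.mul_apply, Perm.inv_def]
  grind [Equiv.symm_apply_eq, Equiv.apply_symm_apply, Equiv.symm_apply_apply]

theorem interaction_subset_union_support (g h : Perm α) :
    interaction g h ⊆ g.support ∪ h.support := by
  refine union_subset inter_subset_union (union_subset_union ?_ ?_) <;>
    refine image_subset_iff.mpr fun z hz ↦ Perm.apply_mem_support.mpr ?_
  exacts [(mem_inter.mp hz).1, (mem_inter.mp hz).2]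

theorem card_interaction_le (g h : Perm α) :
    #(interaction g h) ≤ 3 * #(g.support ∩ h.support) := by
  have := card_image_union_image_le g h (g.support ∩ h.support)
  grw [interaction, card_union_le, this]
  omega

theorem disjoint_of_three_mul_card_le (hcard : 3 * #(g.support ∩ h.support) ≤ #(interaction g h)) :
    Disjoint (g.support ∩ h.support)
      ((g.support ∩ h.support).image g ∪ (g.support ∩ h.support).image h) := by
  rw [← card_union_eq_card_add_card]
  refine (card_union_le _ _).antisymm ?_
  have := card_image_union_image_le g h (g.support ∩ h.support)
  unfold interaction at hcard
  omega

theorem apply_apply_eq_of_disjoint_image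
    (hdisj : Disjoint (g.support ∩ h.support) ((g.support ∩ h.support).image g)) {z : α}
    (hz : z ∈ g.support ∩ h.support) : h (g z) = g z := by
  by_contra hgz
  exact disjoint_left.mp hdisj (mem_inter.mpr ⟨Perm.apply_mem_support.mpr (mem_inter.mp hz).1,
    Perm.mem_support.mpr hgz⟩) (mem_image_of_mem g hz)

/-- On the orbit `{g z, z, h z}` of a point `z` moved by both, `g` and `h` act as two transpositions
of a symmetric group `S₃`, whose product has order three. -/
theorem support_mul_pow_three_subset (hg : g * g = 1) (hh : h * h = 1)
    (hdisj : Disjoint (g.support ∩ h.support)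
      ((g.support ∩ h.support).image g ∪ (g.support ∩ h.support).image h)) :
    ((g * h) ^ 3).support ⊆ (g.support ∪ h.support) \ interaction g h := by
  obtain ⟨hdg, hdh⟩ := disjoint_union_right.mp hdisj
  have hgg : ∀ z, g (g z) = z := DFunLike.congr_fun hg
  have hhh : ∀ z, h (h z) = z := DFunLike.congr_fun hh
  have hhg : ∀ z ∈ g.support ∩ h.support, h (g z) = g z := fun z ↦
    apply_apply_eq_of_disjoint_image hdg
  have hgh : ∀ z ∈ g.support ∩ h.support, g (h z) = h z := by
    rw [inter_comm] at hdh ⊢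
    exact fun z ↦ apply_apply_eq_of_disjoint_image hdh
  intro z hz
  rw [Perm.mem_support] at hz
  contrapose! hz
  have happly : ((g * h) ^ 3) z = g (h (g (h (g (h z))))) := rfl
  rw [mem_sdiff, not_and_not_right, mem_union, Perm.mem_support, Perm.mem_support] at hz
  by_cases hmoved : g z ≠ z ∨ h z ≠ z
  · rcases mem_union.mp (hz hmoved) with hz | hz
    · rw [happly, hgh z hz, hhh, hhg z hz, hgg]
    rcases mem_union.mp hz with hz | hz <;> obtain ⟨y, hy, rfl⟩ := mem_image.mp hz
    · rw [happly, hhg y hy, hgg, hgh y hy, hhh]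
    · rw [happly, hhh, hhg y hy, hgg, hgh y hy]
  · push Not at hmoved
    simp only [happly, hmoved]

theorem mul_pow_three_ne_one (hg : g * g = 1)
    (hcard : 2 * #(g.support ∩ h.support) < #g.support) : (g * h) ^ 3 ≠ 1 := by
  have hgg : ∀ z, g (g z) = z := DFunLike.congr_fun hg
  have hlt : #(g.support ∩ h.support ∪ (g.support ∩ h.support).image g) < #g.support := by
    have := card_union_le (g.support ∩ h.support) ((g.support ∩ h.support).image g)
    have := card_image_le (s := g.support ∩ h.support) (f := g)
    omega
  obtain ⟨s, hs, hsJ⟩ := exists_mem_notMem_of_card_lt_card hlt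
  rw [mem_union, not_or] at hsJ
  have hhs : h s = s := by
    by_contra hhs
    exact hsJ.1 (mem_inter.mpr ⟨hs, Perm.mem_support.mpr hhs⟩)
  have hhgs : h (g s) = g s := by
    by_contra hhgs
    exact hsJ.2 (mem_image.mpr ⟨g s, mem_inter.mpr
      ⟨Perm.apply_mem_support.mpr hs, Perm.mem_support.mpr hhgs⟩, hgg s⟩)
  intro hone
  have happly : g (h (g (h (g (h s))))) = s := DFunLike.congr_fun hone s
  rw [hhs, hhgs, hgg, hhs] at happly
  exact Perm.mem_support.mp hs happly

end Interaction

section MinimalDegree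
open scoped commutatorElement

variable {α : Type*} [DecidableEq α] [Fintype α] {G : Subgroup (Perm α)} {g h : Perm α} {k m : ℕ}

theorem support_inter_support_conj_subset {x : Perm α} {a : α} (hxa : x a = a) :
    g.support ∩ (x * g * x⁻¹).support ⊆
      insert a (({t ∈ g.support.erase a | x t ∈ g.support} : Finset α).image x) := by
  intro y hy
  obtain ⟨t, rfl⟩ := x.surjective y
  obtain ⟨hy, hyx⟩ : g (x t) ≠ x t ∧ g t ≠ t := by simpa using hy
  obtain rfl | hta := eq_or_ne t a
  · simp [hxa]
  · simp [hy, hyx, hta]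

/-- If `x` fixes `a` and maps a fixed point of `g` to `g a`, then `x g x⁻¹` fixes `g a` but moves
`a`, hence does not commute with `g`. -/
theorem exists_conj_commutator_ne_one [MulAction.IsMultiplyPretransitive G α 3] (hg1 : g ≠ 1)
    (hn : #g.support < Fintype.card α) :
    ∃ x ∈ G, ⁅g, x * g * x⁻¹⁆ ≠ 1 ∧
      (Fintype.card α - 2) * (#(g.support ∩ (x * g * x⁻¹).support) - 1) ≤
        (#g.support - 1) * (#g.support - 2) := by
  obtain ⟨a, ha⟩ : ∃ a, g a ≠ a := by simpa [Perm.ext_iff] using hg1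
  obtain ⟨c, -, hc⟩ := exists_mem_notMem_of_card_lt_card (s := g.support) (t := univ) (by simpa)
  have haS := Perm.mem_support.mpr ha
  obtain ⟨x, hx, hxa, hxc, hle⟩ := exists_card_mul_card_filter_mem_le (G := G) haS
    (Perm.apply_mem_support.mpr haS) ha.symm hc
  refine ⟨x, hx, fun hcomm ↦ ha ?_, (Nat.mul_le_mul_left _ ?_).trans hle⟩
  · rw [commutatorElement_eq_one_iff_mul_comm] at hcomm
    have hfix : (x * g * x⁻¹) (g a) = g a := by
      rw [← hxc]
      simp [Perm.notMem_support.mp hc]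
    have hcomm_a : g ((x * g * x⁻¹) a) = (x * g * x⁻¹) (g a) := DFunLike.congr_fun hcomm a
    have hsymm : x.symm a = a := by rw [symm_apply_eq, hxa]
    have : x (g a) = x a := by simpa [hsymm, hxa] using g.injective (hcomm_a.trans hfix)
    exact x.injective this
  · have := card_le_card (support_inter_support_conj_subset (g := g) hxa)
    grw [card_insert_le, card_image_le] at this
    omega

theorem exists_conj_card_le_card_interaction [MulAction.IsMultiplyPretransitive G α 3]
    (hmin : ∀ h ∈ G, h ≠ 1 → m ≤ #h.support) (hg : g ∈ G) (hg1 : g ≠ 1)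
    (hn : #g.support < Fintype.card α) :
    ∃ x ∈ G, m ≤ #(interaction g (x * g * x⁻¹)) ∧
      (Fintype.card α - 2) * (#(g.support ∩ (x * g * x⁻¹).support) - 1) ≤
        (#g.support - 1) * (#g.support - 2) := by
  obtain ⟨x, hx, hne, hle⟩ := exists_conj_commutator_ne_one (G := G) hg1 hn
  refine ⟨x, hx, ?_, hle⟩
  have hconj : x * g * x⁻¹ ∈ G := G.mul_mem (G.mul_mem hx hg) (G.inv_mem hx)
  have hcomm : ⁅g, x * g * x⁻¹⁆ ∈ G :=
    G.mul_mem (G.mul_mem (G.mul_mem hg hconj) (G.inv_mem hg)) (G.inv_mem hconj)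
  exact (hmin _ hcomm hne).trans (card_le_card (support_commutator_subset _ _))

theorem eq_six_of_mul_le {n j : ℕ} (hn : (k + 1) ^ 2 ≤ n) (hm4 : 4 ≤ m) (hmk : m ≤ 2 * k)
    (hmj : m ≤ 3 * j) (hle : (n - 2) * (j - 1) ≤ (m - 1) * (m - 2)) : m = 6 ∧ k = 3 := by
  have hm8 : m ≤ 8 := by
    by_contra! hm9
    obtain ⟨p, rfl⟩ : ∃ p, m = p + 9 := ⟨m - 9, by omega⟩
    have hsq : (p + 11) ^ 2 ≤ (2 * (k + 1)) ^ 2 := Nat.pow_le_pow_left (by omega) 2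
    obtain ⟨i, rfl⟩ : ∃ i, j = i + 1 := ⟨j - 1, by omega⟩
    have hn2 : 2 ≤ n := by nlinarith
    obtain ⟨q, rfl⟩ := Nat.exists_eq_add_of_le' hn2
    have hi : p + 6 ≤ 3 * i := by omega
    have hq : p * p + 22 * p + 113 ≤ 4 * q := by nlinarith
    have := Nat.mul_le_mul hq hi
    simp only [Nat.add_sub_cancel, show p + 9 - 1 = p + 8 by omega,
      show p + 9 - 2 = p + 7 by omega] at hle
    nlinarith
  have hj (i : ℕ) (hij : i + 1 ≤ j) : (n - 2) * i ≤ (m - 1) * (m - 2) :=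
    (Nat.mul_le_mul_left _ (by omega)).trans hle
  have hk (c : ℕ) (hck : c ≤ k) : (c + 1) ^ 2 ≤ n := by grw [hck, hn]
  have hj₁ := hj 1
  have hj₂ := hj 2
  have hk₂ := hk 2
  have hk₃ := hk 3
  have hk₄ := hk 4
  interval_cases m <;> norm_num at hj₁ hj₂ hk₂ hk₃ hk₄ ⊢ <;> omega

theorem card_interaction_lt_of_involutions (hmin : ∀ h ∈ G, h ≠ 1 → 6 ≤ #h.support)
    (hg : g ∈ G) (hh : h ∈ G) (hgg : g * g = 1) (hhh : h * h = 1) (hgc : #g.support = 6)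
    (hhc : #h.support = 6) (hJ : #(g.support ∩ h.support) = 2) : #(interaction g h) < 6 := by
  by_contra! hint
  have hne : (g * h) ^ 3 ≠ 1 := mul_pow_three_ne_one hgg (by omega)
  have hpow := hmin _ (G.pow_mem (G.mul_mem hg hh) 3) hne
  have hle := card_le_card
    (support_mul_pow_three_subset hgg hhh (disjoint_of_three_mul_card_le (by omega)))
  have hsdiff := card_sdiff_add_card_eq_card (interaction_subset_union_support g h)
  have hunion := card_union_add_card_inter g.support h.support
  omega

theorem exists_card_support_lt_six [MulAction.IsMultiplyPretransitive G α 3] (hg : g ∈ G)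
    (hg1 : g ≠ 1) (hgk : permIndex g ≤ 3) (hn : 16 ≤ Fintype.card α) :
    ∃ h ∈ G, h ≠ 1 ∧ #h.support < 6 := by
  by_contra! hmin
  have hgc : #g.support = 6 := by
    have := card_support_le_two_mul_permIndex g
    have := hmin g hg hg1
    omega
  have hgg : g * g = 1 := mul_self_eq_one_of_two_mul_permIndex_le (by omega)
  obtain ⟨x, hx, hint, hle⟩ := exists_conj_card_le_card_interaction hmin hg hg1 (by omega)
  have hJ : #(g.support ∩ (x * g * x⁻¹).support) = 2 := by
    have hlower := card_interaction_le g (x * g * x⁻¹)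
    rw [hgc] at hle
    have hupper : #(g.support ∩ (x * g * x⁻¹).support) ≤ 2 := by
      by_contra! hJ
      have := Nat.mul_le_mul_left (Fintype.card α - 2) (Nat.le_sub_one_of_lt hJ)
      omega
    omega
  have hconj : (x * g * x⁻¹) * (x * g * x⁻¹) = 1 := by
    simpa [mul_assoc] using congrArg (x * · * x⁻¹) hgg
  exact hint.not_gt (card_interaction_lt_of_involutions hmin hg
    (G.mul_mem (G.mul_mem hx hg) (G.inv_mem hx)) hgg hconj hgc
    (by rw [Perm.card_support_conj, hgc]) hJ)

theorem exists_card_support_lt_four [MulAction.IsMultiplyPretransitive G α 3] (hg : g ∈ G)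
    (hg1 : g ≠ 1) (hgk : permIndex g ≤ k) (hn : (k + 1) ^ 2 ≤ Fintype.card α) :
    ∃ h ∈ G, h ≠ 1 ∧ #h.support < 4 := by
  by_contra! hfour
  obtain ⟨h, hh, hmin⟩ := exists_min_image ({h ∈ univ | h ∈ G ∧ h ≠ 1} : Finset (Perm α))
    (fun h ↦ #h.support) ⟨g, by simp [hg, hg1]⟩
  simp only [mem_filter, mem_univ, true_and, and_imp] at hh hmin
  have hmk : #h.support ≤ 2 * k := by
    grw [hmin g hg hg1, card_support_le_two_mul_permIndex, hgk]
  obtain ⟨x, -, hint, hle⟩ := exists_conj_card_le_card_interaction (G := G) hmin hh.1 hh.2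
    (by nlinarith)
  obtain ⟨hm, rfl⟩ := eq_six_of_mul_le hn (hfour h hh.1 hh.2) hmk
    (hint.trans (card_interaction_le _ _)) hle
  obtain ⟨u, hu, hu1, hlt⟩ := exists_card_support_lt_six hg hg1 hgk (by omega)
  exact (hmin u hu hu1).not_gt (by omega)

end MinimalDegree

section Jordan

variable {α : Type*} [Fintype α] {G : Subgroup (Perm α)}

theorem exists_permIndex_eq_groupIndex [MulAction.IsPretransitive G α] (hG : G ≠ ⊤) :
    ∃ g ∈ G, g ≠ 1 ∧ permIndex g = groupIndex G := by
  refine Nat.sInf_mem (s := {k | ∃ g ∈ G, g ≠ 1 ∧ permIndex g = k}) ?_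
  by_contra hempty
  have htriv : ∀ g ∈ G, g = 1 := fun g hg ↦ by_contra fun hg1 ↦ hempty ⟨_, g, hg, hg1, rfl⟩
  refine hG ((Subgroup.eq_top_iff' G).mpr fun t ↦ ?_)
  convert G.one_mem
  ext z
  obtain ⟨g, hg⟩ := MulAction.exists_smul_eq G z (t z)
  rw [← hg, Subgroup.smul_def, htriv g g.2, one_smul, Perm.one_apply]

variable [DecidableEq α] {g : Perm α} {k : ℕ}

theorem exists_card_support_lt_four_of_isPreprimitive [MulAction.IsPreprimitive G α] (hg : g ∈ G)
    (hg1 : g ≠ 1) (hgk : permIndex g ≤ k) (hn : (k + 1) ^ 2 ≤ Fintype.card α) :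
    ∃ h ∈ G, h ≠ 1 ∧ #h.support < 4 := by
  by_contra! hfour
  have hk : 2 ≤ k := by
    have := hfour g hg hg1
    have := card_support_le_two_mul_permIndex g
    omega
  have := isMultiplyPretransitive_two_of_hasRowGap (hasRowGap hg hg1 hgk hk hn) hk hn
  have htop := smallIndexGraph_eq_top hg hg1 hgk
  have : MulAction.IsMultiplyPretransitive G α 3 :=
    is_three_pretransitive_iff.mpr (tripleOrbital_of_ne htop hk hn)
  obtain ⟨h, hh, hh1, hlt⟩ := exists_card_support_lt_four hg hg1 hgk hn
  exact hlt.not_ge (hfour h hh hh1)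

theorem eq_alternatingGroup_or_eq_top (h : alternatingGroup α ≤ G) :
    G = alternatingGroup α ∨ G = ⊤ := by
  refine or_iff_not_imp_left.mpr fun hne ↦ (Subgroup.eq_top_iff' G).mpr fun t ↦ ?_
  obtain ⟨s, hs, hsodd⟩ := SetLike.not_le_iff_exists.mp fun hle ↦ hne (hle.antisymm h)
  rw [Perm.mem_alternatingGroup] at hsodd
  obtain ht | ht := Int.units_eq_one_or (Perm.sign t)
  · exact h (Perm.mem_alternatingGroup.mpr ht)
  · have hts : t * s ∈ G := h <| Perm.mem_alternatingGroup.mpr <| by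
      simp [ht, (Int.units_eq_one_or _).resolve_left hsodd]
    simpa using G.mul_mem hts (G.inv_mem hs)

theorem eq_alternatingGroup_or_eq_top_of_card_support_lt_four
    (hG : MulAction.IsPreprimitive G α) (hg : g ∈ G) (hg1 : g ≠ 1) (hlt : #g.support < 4) :
    G = alternatingGroup α ∨ G = ⊤ := by
  obtain hcard | hcard : #g.support = 2 ∨ #g.support = 3 := by
    have := Perm.two_le_card_support_of_ne_one hg1
    omega
  · exact .inr (Perm.subgroup_eq_top_of_isPreprimitive_of_isSwap_mem hG g
      (Perm.card_support_eq_two.mp hcard) hg)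
  · exact eq_alternatingGroup_or_eq_top
      (Perm.alternatingGroup_le_of_isPreprimitive_of_isThreeCycle_mem hG
        (card_support_eq_three_iff.mp hcard) hg)

end Jordan

end

theorem index_ge_sqrt_of_primitive_general {Ω : Type*} [Fintype Ω] [DecidableEq Ω]
    (G : Subgroup (Equiv.Perm Ω)) (hprim : IsPrimitivePermGroup G) (hAn : G ≠ alternatingGroup Ω)
    (hSn : G ≠ ⊤) : Nat.sqrt (Fintype.card Ω) ≤ groupIndex G := by
  by_contra! hlt
  have hG : MulAction.IsPreprimitive G Ω :=
    { hprim.1 with isTrivialBlock_of_isBlock := fun {B} hB ↦ hprim.2 B hB }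
  obtain ⟨g, hg, hg1, hgk⟩ := exists_permIndex_eq_groupIndex hSn
  obtain ⟨h, hh, hh1, hh4⟩ := exists_card_support_lt_four_of_isPreprimitive hg hg1 hgk.le
    (Nat.le_sqrt'.mp hlt)
  exact (eq_alternatingGroup_or_eq_top_of_card_support_lt_four hG hh hh1 hh4).elim hAn hSn

/-- Theorem 2.4 of Bhargava's paper. If `G ≤ S_n` is a primitive permutation group not
equal to `A_n` or `S_n`, then `ind(G) ≥ ⌊√n⌋`. -/
theorem index_ge_sqrt_of_primitive (n : ℕ) (G : Subgroup (Equiv.Perm (Fin n)))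
    (hprim : IsPrimitivePermGroup G) (hAn : G ≠ alternatingGroup (Fin n))
    (hSn : G ≠ ⊤) : Nat.sqrt n ≤ groupIndex G := by
  simpa using index_ge_sqrt_of_primitive_general G hprim hAn hSn
end

section
/- Let m, k, y be positive integers with 1 ≤ k < m/2, and let σ ∈ S_m be a permutation that is a product of y disjoint transpositions (i.e., σ is an involution moving exactly 2y points). Then the number f(m,k,y) of k-element subsets S of {1,...,m} with σ(S) ≠ S satisfies f(m,k,y) ≥ (8/(5k)) · C(m-1, k-1) · y, where C(m-1,k-1) is the binomial coefficient. -/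
open scoped Classical
open Polynomial

/-!
The `σ`-invariant subsets of an `n`-element set, counted by cardinality, have generating function
`(1 + X ^ 2) ^ y * (1 + X) ^ (n - 2 * y)`: each transposed pair is taken or omitted as a whole, each
fixed point freely. Replacing `(1 + X) ^ 2` by `1 + X ^ 2` twice shows that every coefficient is a
convex function of `y`, so it lies below the chord joining `y = 0` to `y = n / 2`. It remains to
bound the coefficient at `y = n / 2`, which is zero or a single binomial coefficient with top
`n / 2`; the square of the latter is at most the corresponding coefficient with top `n`.
-/

section InvariantSubsets

variable {α : Type*} [DecidableEq α] {σ : α → α}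

/-- The generating function by cardinality of the subsets of `U` that `σ` maps onto themselves. -/
noncomputable def invariantGenFun (σ : α → α) (U : Finset α) : ℕ[X] :=
  ∑ S ∈ U.powerset with S.image σ = S, X ^ S.card

theorem coeff_invariantGenFun (σ : α → α) (U : Finset α) (k : ℕ) :
    (invariantGenFun σ U).coeff k = ((U.powersetCard k).filter fun S ↦ S.image σ = S).card := by
  simp only [invariantGenFun, finsetSum_coeff, coeff_X_pow, ← Finset.card_filter,
    Finset.filter_filter, Finset.powersetCard_eq_filter]
  congr 1
  ext S
  simp only [Finset.mem_filter]
  tauto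

theorem invariantGenFun_union (hσ : σ.Injective) {U V : Finset α} (hU : U.image σ = U)
    (hV : V.image σ = V) (hUV : Disjoint U V) :
    invariantGenFun σ (U ∪ V) = invariantGenFun σ U * invariantGenFun σ V := by
  simp only [invariantGenFun, Finset.sum_mul_sum, ← Finset.sum_product']
  symm
  refine Finset.sum_nbij' (fun p ↦ p.1 ∪ p.2) (fun S ↦ (S ∩ U, S ∩ V)) ?_ ?_ ?_ ?_ ?_
  · rintro ⟨S, T⟩ h
    simp only [Finset.mem_product, Finset.mem_filter, Finset.mem_powerset] at h ⊢
    exact ⟨Finset.union_subset_union h.1.1 h.2.1, by rw [Finset.image_union, h.1.2, h.2.2]⟩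
  · intro S h
    simp only [Finset.mem_product, Finset.mem_filter, Finset.mem_powerset] at h ⊢
    exact ⟨⟨Finset.inter_subset_right, by rw [Finset.image_inter _ _ hσ, h.2, hU]⟩,
      Finset.inter_subset_right, by rw [Finset.image_inter _ _ hσ, h.2, hV]⟩
  · rintro ⟨S, T⟩ h
    simp only [Finset.mem_product, Finset.mem_filter, Finset.mem_powerset] at h
    have hSV := hUV.mono_left h.1.1
    have hTU := hUV.symm.mono_left h.2.1
    simp only [Finset.union_inter_distrib_right,
      Finset.inter_eq_left.2 h.1.1, Finset.inter_eq_left.2 h.2.1,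
      Finset.disjoint_iff_inter_eq_empty.1 hSV, Finset.disjoint_iff_inter_eq_empty.1 hTU,
      Finset.union_empty, Finset.empty_union]
  · intro S h
    simp only [Finset.mem_filter, Finset.mem_powerset] at h
    rw [← Finset.inter_union_distrib_left, Finset.inter_eq_left.2 h.1]
  · rintro ⟨S, T⟩ h
    simp only [Finset.mem_product, Finset.mem_filter, Finset.mem_powerset] at h
    rw [Finset.card_union_of_disjoint (hUV.mono h.1.1 h.2.1), pow_add]

theorem invariantGenFun_of_forall_fixed {U : Finset α} (hU : ∀ x ∈ U, σ x = x) :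
    invariantGenFun σ U = (1 + X) ^ U.card := by
  have invariant : ∀ S ∈ U.powerset, S.image σ = S := fun S hS ↦ by
    rw [Finset.image_congr (g := id) fun x hx ↦ hU x (Finset.mem_powerset.1 hS hx),
      Finset.image_id]
  rw [invariantGenFun, Finset.filter_true_of_mem invariant, add_comm]
  simpa using Finset.sum_pow_mul_eq_add_pow (X : ℕ[X]) 1 U

theorem invariantGenFun_pair {a b : α} (hab : a ≠ b) (ha : σ a = b) (hb : σ b = a) :
    invariantGenFun σ {a, b} = 1 + X ^ 2 := by
  have powerset_eq : ({a, b} : Finset α).powerset.filter (fun S ↦ S.image σ = S) =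
      {∅, {a, b}} := by
    ext S
    simp only [Finset.mem_filter, Finset.mem_powerset, Finset.mem_insert, Finset.mem_singleton]
    constructor
    · rintro ⟨hS, hσS⟩
      rw [← Finset.coe_subset, Finset.coe_pair, Set.subset_pair_iff_eq] at hS
      obtain rfl | rfl | rfl | rfl : S = ∅ ∨ S = {a} ∨ S = {b} ∨ S = {a, b} := mod_cast hS
      all_goals simp_all
    · rintro (rfl | rfl) <;> simp [ha, hb, Finset.pair_comm]
  rw [invariantGenFun, powerset_eq, Finset.sum_pair (Finset.insert_ne_empty a {b}).symm,
    Finset.card_empty, Finset.card_pair hab, pow_zero]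

theorem invariantGenFun_of_forall_not_fixed (hσ : σ.Involutive) {U : Finset α}
    (hU : U.image σ = U) (hmoved : ∀ x ∈ U, σ x ≠ x) {y : ℕ} (hcard : U.card = 2 * y) :
    invariantGenFun σ U = (1 + X ^ 2) ^ y := by
  induction y generalizing U with
  | zero =>
    rw [Finset.card_eq_zero.1 hcard, invariantGenFun_of_forall_fixed (by simp)]
    simp
  | succ y ih =>
    obtain ⟨a, haU⟩ : U.Nonempty := Finset.card_pos.1 (by omega)
    have hab : a ≠ σ a := (hmoved a haU).symm
    have pair_subset : {a, σ a} ⊆ U :=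
      Finset.insert_subset haU <| Finset.singleton_subset_iff.2 <|
        hU ▸ Finset.mem_image_of_mem σ haU
    have pair_invariant : ({a, σ a} : Finset α).image σ = {a, σ a} := by
      rw [Finset.image_insert, Finset.image_singleton, hσ a, Finset.pair_comm]
    have sdiff_invariant : (U \ {a, σ a}).image σ = U \ {a, σ a} := by
      rw [Finset.image_sdiff _ _ hσ.injective, hU, pair_invariant]
    have sdiff_card : (U \ {a, σ a}).card = 2 * y := by
      rw [Finset.card_sdiff_of_subset pair_subset, Finset.card_pair hab]
      omega
    rw [← Finset.union_sdiff_of_subset pair_subset,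
      invariantGenFun_union hσ.injective pair_invariant sdiff_invariant Finset.disjoint_sdiff,
      invariantGenFun_pair hab rfl (hσ a),
      ih sdiff_invariant (fun x hx ↦ hmoved x (Finset.sdiff_subset hx)) sdiff_card,
      pow_succ' (1 + X ^ 2) y]

theorem card_moved_add_coeff_invariantGenFun [Fintype α] (σ : α → α) (k : ℕ) :
    (Finset.univ.filter fun S : Finset α ↦ S.card = k ∧ S.image σ ≠ S).card +
      (invariantGenFun σ Finset.univ).coeff k = (Fintype.card α).choose k := by
  rw [coeff_invariantGenFun, ← Finset.filter_filter, ← Finset.powerset_univ,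
    ← Finset.powersetCard_eq_filter, add_comm, Finset.card_filter_add_card_filter_not,
    Finset.card_powersetCard, Finset.card_univ]

end InvariantSubsets

/-- The generating function by cardinality of the subsets of an `n`-element set invariant under a
product of `y` disjoint transpositions. It has this meaning only for `2 * y ≤ n`, since the
subtraction is truncated. -/
noncomputable def involutionPoly (n y : ℕ) : ℕ[X] :=
  (1 + X ^ 2) ^ y * (1 + X) ^ (n - 2 * y)

section CycleType

variable {α : Type*} [Fintype α] [DecidableEq α] {σ : Equiv.Perm α} {y : ℕ}

theorem involutive_of_cycleType_eq_replicate_two (hσ : σ.cycleType = Multiset.replicate y 2) :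
    Function.Involutive σ := by
  have sq_eq_one : σ ^ 2 = 1 := Equiv.Perm.pow_prime_eq_one_iff.2 fun c hc ↦
    Multiset.eq_of_mem_replicate (hσ ▸ hc)
  intro x
  simpa [pow_two] using Equiv.congr_fun sq_eq_one x

theorem card_support_of_cycleType_eq_replicate_two
    (hσ : σ.cycleType = Multiset.replicate y 2) : σ.support.card = 2 * y := by
  rw [← Equiv.Perm.sum_cycleType, hσ, Multiset.sum_replicate, smul_eq_mul, mul_comm]

theorem invariantGenFun_univ_of_cycleType_eq_replicate_two
    (hσ : σ.cycleType = Multiset.replicate y 2) :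
    invariantGenFun σ Finset.univ = involutionPoly (Fintype.card α) y := by
  have hcard := card_support_of_cycleType_eq_replicate_two hσ
  have support_invariant : σ.support.image σ = σ.support :=
    Finset.eq_of_subset_of_card_le
      (Finset.image_subset_iff.2 fun _ ↦ Equiv.Perm.apply_mem_support.2)
      (Finset.card_image_of_injective _ σ.injective).ge
  have compl_invariant : (σ.supportᶜ).image σ = σ.supportᶜ := by
    rw [Finset.compl_eq_univ_sdiff, Finset.image_sdiff _ _ σ.injective, support_invariant,
      Finset.image_univ_equiv]
  rw [← Finset.union_compl σ.support,
    invariantGenFun_union σ.injective support_invariant compl_invariant disjoint_compl_right,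
    invariantGenFun_of_forall_not_fixed (involutive_of_cycleType_eq_replicate_two hσ)
      support_invariant (fun _ ↦ Equiv.Perm.mem_support.1) hcard,
    invariantGenFun_of_forall_fixed
      fun _ hx ↦ Equiv.Perm.notMem_support.1 (Finset.mem_compl.1 hx),
    Finset.card_compl, hcard, involutionPoly]

end CycleType

section Convexity

variable {R : Type*} [CommRing R] [LinearOrder R] [IsStrictOrderedRing R] {a : ℕ → R} {N : ℕ}

theorem succ_mul_le_of_midpoint_convex
    (ha : ∀ i, i + 2 ≤ N → 2 * a (i + 1) ≤ a i + a (i + 2)) {i : ℕ} (hi : i + 1 ≤ N) :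
    (i + 1) * a i ≤ a 0 + i * a (i + 1) := by
  induction i with
  | zero => simp
  | succ i ih =>
    have scaled := mul_le_mul_of_nonneg_left (ha i hi) (by positivity : (0 : R) ≤ i + 1)
    push_cast
    linarith [ih (by omega)]

theorem mul_le_chord_of_midpoint_convex
    (ha : ∀ i, i + 2 ≤ N → 2 * a (i + 1) ≤ a i + a (i + 2)) {i : ℕ} (hi : i ≤ N) :
    N * a i ≤ (N - i) * a 0 + i * a N := by
  induction N, hi using Nat.le_induction with
  | base => simp
  | succ n hin ih =>
    obtain rfl | hn := n.eq_zero_or_pos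
    · simp [Nat.le_zero.1 hin]
    have hn' : (0 : R) < n := Nat.cast_pos.2 hn
    have chord := mul_le_mul_of_nonneg_left (ih fun j hj ↦ ha j (by omega))
      (by positivity : (0 : R) ≤ n + 1)
    have slope := mul_le_mul_of_nonneg_left (succ_mul_le_of_midpoint_convex ha le_rfl)
      (Nat.cast_nonneg i : (0 : R) ≤ i)
    refine le_of_mul_le_mul_left ?_ hn'
    push_cast
    linarith

end Convexity

theorem le_choose_of_pos_of_lt {n k : ℕ} (hk : 0 < k) (hkn : k < n) : n ≤ n.choose k := by
  induction n generalizing k with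
  | zero => omega
  | succ n ih =>
    obtain ⟨j, rfl⟩ := Nat.exists_eq_succ_of_ne_zero hk.ne'
    rw [Nat.choose_succ_succ]
    obtain hjn | rfl := (Nat.le_of_lt_succ hkn).lt_or_eq
    · have one_le : 1 ≤ n.choose j := Nat.choose_pos (by omega)
      have n_le := ih j.succ_pos hjn
      omega
    · simp

theorem choose_mul_choose_le_choose_add (m n i j : ℕ) :
    m.choose i * n.choose j ≤ (m + n).choose (i + j) := by
  rw [Nat.add_choose_eq]
  exact Finset.single_le_sum (f := fun p : ℕ × ℕ ↦ m.choose p.1 * n.choose p.2)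
    (a := (i, j)) (fun _ _ ↦ Nat.zero_le _) (Finset.HasAntidiagonal.mem_antidiagonal.2 rfl)

theorem five_mul_choose_le_choose_two_mul {n k : ℕ} (hn : 3 ≤ n) (hk : 0 < k) (hkn : k < n) :
    5 * n.choose k ≤ (2 * n).choose (2 * k) := by
  obtain hn5 | hn5 := lt_or_ge n 5
  · interval_cases n <;> interval_cases k <;> decide
  · calc
      5 * n.choose k ≤ n.choose k * n.choose k :=
        Nat.mul_le_mul_right _ (hn5.trans (le_choose_of_pos_of_lt hk hkn))
      _ ≤ (2 * n).choose (2 * k) := by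
        simpa only [two_mul] using choose_mul_choose_le_choose_add n n k k

theorem choose_two_mul_half_le_choose_succ (n k : ℕ) :
    n.choose (2 * (k / 2)) ≤ (n + 1).choose k := by
  obtain ⟨j, rfl | rfl⟩ := k.even_or_odd'
  · rw [Nat.mul_div_cancel_left j two_pos]
    exact Nat.choose_le_succ n (2 * j)
  · rw [show (2 * j + 1) / 2 = j by omega, Nat.choose_succ_succ]
    exact Nat.le_add_right _ _

theorem five_mul_choose_half_le_choose {n k : ℕ} (hn : 2 ≤ n) (hk : 0 < k)
    (hkn : k < 2 * n + 1) : 5 * n.choose (k / 2) ≤ (2 * n + 1).choose k := by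
  have top_le := le_choose_of_pos_of_lt hk hkn
  obtain half | half | half : k / 2 = 0 ∨ k / 2 = n ∨ (0 < k / 2 ∧ k / 2 < n) := by omega
  · rw [half, Nat.choose_zero_right]
    omega
  · rw [half, Nat.choose_self]
    omega
  · obtain rfl | hn3 := hn.eq_or_lt
    · obtain rfl | rfl : k = 2 ∨ k = 3 := by omega
      all_goals decide
    · exact (five_mul_choose_le_choose_two_mul hn3 half.1 half.2).trans
        (choose_two_mul_half_le_choose_succ (2 * n) k)

theorem coeff_one_add_X_sq_pow (n k : ℕ) :
    ((1 + X ^ 2 : ℕ[X]) ^ n).coeff k = if 2 ∣ k then n.choose (k / 2) else 0 := by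
  have eq_expand : (1 + X ^ 2 : ℕ[X]) ^ n = expand ℕ 2 ((1 + X) ^ n) := by simp
  rw [eq_expand, coeff_expand two_pos, coeff_one_add_X_pow, Nat.cast_id]

theorem coeff_involutionPoly_zero (n k : ℕ) : (involutionPoly n 0).coeff k = n.choose k := by
  simp [involutionPoly, coeff_one_add_X_pow]

theorem coeff_involutionPoly_two_mul (n k : ℕ) :
    (involutionPoly (2 * n) n).coeff k = if 2 ∣ k then n.choose (k / 2) else 0 := by
  rw [involutionPoly, Nat.sub_self, pow_zero, mul_one, coeff_one_add_X_sq_pow]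

theorem coeff_involutionPoly_two_mul_add_one (n k : ℕ) :
    (involutionPoly (2 * n + 1) n).coeff k = n.choose (k / 2) := by
  rw [involutionPoly, Nat.add_sub_cancel_left, pow_one, mul_add, mul_one, coeff_add,
    coeff_one_add_X_sq_pow]
  cases k with
  | zero => simp
  | succ k =>
    rw [coeff_mul_X, coeff_one_add_X_sq_pow]
    by_cases hk : 2 ∣ k
    · rw [if_neg (by omega), if_pos hk, zero_add, show (k + 1) / 2 = k / 2 by omega]
    · rw [if_pos (by omega), if_neg hk, add_zero]

theorem two_mul_coeff_involutionPoly_le {n y : ℕ} (h : 2 * (y + 2) ≤ n) (k : ℕ) :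
    2 * (involutionPoly n (y + 1)).coeff k ≤
      (involutionPoly n y).coeff k + (involutionPoly n (y + 2)).coeff k := by
  obtain ⟨r, rfl⟩ := Nat.exists_eq_add_of_le h
  have second_difference : involutionPoly (2 * (y + 2) + r) y +
      involutionPoly (2 * (y + 2) + r) (y + 2) =
      2 * involutionPoly (2 * (y + 2) + r) (y + 1) +
        4 * X ^ 2 * ((1 + X ^ 2) ^ y * (1 + X) ^ r) := by
    simp only [involutionPoly, show 2 * (y + 2) + r - 2 * y = r + 4 by omega,
      show 2 * (y + 2) + r - 2 * (y + 1) = r + 2 by omega, Nat.add_sub_cancel_left]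
    ring
  rw [← coeff_add, second_difference, coeff_add, coeff_ofNat_mul]
  exact Nat.le_add_right _ _

theorem five_mul_coeff_involutionPoly_half_le {n k : ℕ} (hk : 0 < k) (hkn : k < n) (hn : n ≠ 3)
    (hnk : ¬(n = 4 ∧ k = 2)) : 5 * (involutionPoly n (n / 2)).coeff k ≤ n.choose k := by
  obtain ⟨r, rfl | rfl⟩ := n.even_or_odd'
  · rw [Nat.mul_div_cancel_left r two_pos, coeff_involutionPoly_two_mul]
    split_ifs with hk2
    · obtain ⟨j, rfl⟩ := hk2
      rw [Nat.mul_div_cancel_left j two_pos]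
      exact five_mul_choose_le_choose_two_mul (by omega) (by omega) (by omega)
    · exact Nat.zero_le _
  · rw [show (2 * r + 1) / 2 = r by omega, coeff_involutionPoly_two_mul_add_one]
    exact five_mul_choose_half_le_choose (by omega) hk hkn

theorem coeff_involutionPoly_half_add_le {n k : ℕ} (hk : 0 < k) (hkn : k < n)
    (hnk : ¬(n = 4 ∧ k = 2)) :
    5 * n * (involutionPoly n (n / 2)).coeff k + 8 * (n / 2) * n.choose k ≤
      5 * n * n.choose k := by
  obtain rfl | hn := eq_or_ne n 3
  · rw [show 3 / 2 = 1 from rfl, coeff_involutionPoly_two_mul_add_one 1 k]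
    interval_cases k <;> decide
  · have half_le : 8 * (n / 2) ≤ 4 * n := by omega
    calc
      5 * n * (involutionPoly n (n / 2)).coeff k + 8 * (n / 2) * n.choose k
          = n * (5 * (involutionPoly n (n / 2)).coeff k) + 8 * (n / 2) * n.choose k := by ring
      _ ≤ n * n.choose k + 4 * n * n.choose k := by
        gcongr
        exact five_mul_coeff_involutionPoly_half_le hk hkn hn hnk
      _ = 5 * n * n.choose k := by ring

theorem coeff_involutionPoly_add_le {n k y : ℕ} (hk : 0 < k) (hkn : k < n)
    (hnk : ¬(n = 4 ∧ k = 2)) (hy : 2 * y ≤ n) :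
    5 * n * (involutionPoly n y).coeff k + 8 * y * n.choose k ≤ 5 * n * n.choose k := by
  have chord := mul_le_chord_of_midpoint_convex (N := n / 2)
    (a := fun z ↦ ((involutionPoly n z).coeff k : ℤ))
    (fun z hz ↦ mod_cast two_mul_coeff_involutionPoly_le (by omega) k) (show y ≤ n / 2 by omega)
  have endpoint := coeff_involutionPoly_half_add_le hk hkn hnk
  rw [coeff_involutionPoly_zero] at chord
  have half_pos : (0 : ℤ) < (n / 2 : ℕ) := Nat.cast_pos.2 (by omega)
  generalize n / 2 = r at *
  zify at endpoint ⊢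
  refine le_of_mul_le_mul_left ?_ half_pos
  linarith [mul_le_mul_of_nonneg_left chord (by positivity : (0 : ℤ) ≤ 5 * n),
    mul_le_mul_of_nonneg_left endpoint (by positivity : (0 : ℤ) ≤ y)]

theorem moved_subsets_lower_bound_general {α : Type*} [Fintype α] [DecidableEq α] {k y : ℕ}
    (hk : 0 < k) (hkα : k < Fintype.card α) (hα : ¬(Fintype.card α = 4 ∧ k = 2))
    {σ : Equiv.Perm α} (hσ : σ.cycleType = Multiset.replicate y 2) :
    8 / (5 * (k : ℝ)) * ((Fintype.card α - 1).choose (k - 1) : ℝ) * (y : ℝ) ≤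
      ((Finset.univ.filter fun S : Finset α ↦ S.card = k ∧ S.image σ ≠ S).card : ℝ) := by
  have two_mul_le : 2 * y ≤ Fintype.card α :=
    card_support_of_cycleType_eq_replicate_two hσ ▸ σ.support.card_le_univ
  have invariant_le := coeff_involutionPoly_add_le hk hkα hα two_mul_le
  have moved_add := congrArg (Nat.cast (R := ℝ)) (card_moved_add_coeff_invariantGenFun σ k)
  rw [Nat.cast_add, invariantGenFun_univ_of_cycleType_eq_replicate_two hσ] at moved_add
  have absorption := Nat.add_one_mul_choose_eq (Fintype.card α - 1) (k - 1)
  rw [Nat.sub_add_cancel (by omega), Nat.sub_add_cancel hk] at absorption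
  generalize Fintype.card α = n at *
  have hk' : (0 : ℝ) < k := Nat.cast_pos.2 hk
  have hn' : (0 : ℝ) < n := Nat.cast_pos.2 (by omega)
  rify at invariant_le absorption
  calc
    8 / (5 * (k : ℝ)) * ((n - 1).choose (k - 1) : ℝ) * y
        = 8 * y * n.choose k / (5 * n) := by
      field_simp [hk'.ne']
      linear_combination y * absorption
    _ ≤ _ := by
      rw [div_le_iff₀ (by positivity)]
      linear_combination invariant_le - 5 * n * moved_add

/-- The inequality (2.2) of Bhargava's paper. Let `1 ≤ k < m/2` and let `σ ∈ S_m` be a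
product of `y` disjoint transpositions. Then the number `f(m,k,y)` of `k`-element
subsets `S` of `{1,...,m}` moved by `σ` (i.e. with `σ(S) ≠ S`) satisfies
`f(m,k,y) ≥ (8/(5k)) · C(m-1,k-1) · y`. -/
theorem moved_subsets_lower_bound (m k y : ℕ) (hk : 1 ≤ k) (hkm : 2 * k < m)
    (hy : 1 ≤ y) (σ : Equiv.Perm (Fin m))
    (hσ : σ.cycleType = Multiset.replicate y 2) :
    8 / (5 * (k : ℝ)) * (Nat.choose (m - 1) (k - 1) : ℝ) * (y : ℝ) ≤
      ((Finset.univ.filter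
        (fun S : Finset (Fin m) => S.card = k ∧ S.image σ ≠ S)).card : ℝ) := by
  simpa only [Fintype.card_fin] using
    moved_subsets_lower_bound_general hk (by rw [Fintype.card_fin]; omega)
      (by rw [Fintype.card_fin]; omega) hσ
end
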